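/- Existence of dual paths: Let Σ be an arrangement of arcs in ℝ² and let a, b be points of ℝ² lying on no arc of Σ. Then there exists a simple arc γ in ℝ² from a to b such that γ contains no point lying on two distinct arcs of Σ, and γ intersects each arc of Σ in at most one point, at which γ crosses that arc. -/

import Mathlib

open Set Topology

noncomputable section

abbrev Plane : Type := EuclideanSpace ℝ (Fin 2)

abbrev SpherePt : Type := ↥(Metric.sphere (0 : EuclideanSpace ℝ (Fin 3)) 1)

/-- `γ` crosses the curve `σ` at `p`: `p` lies on both sets, and in every neighbourhood of `p`
there is a smaller neighbourhood `V` such that `V \ σ` splits into two connected "sides",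
both of which meet `γ`. -/
def CrossesAt {X : Type*} [TopologicalSpace X] (σ γ : Set X) (p : X) : Prop :=
  p ∈ σ ∧ p ∈ γ ∧ ∀ U ∈ nhds p, ∃ V ∈ nhds p, V ⊆ U ∧
    ∃ C₁ C₂ : Set X, V \ σ = C₁ ∪ C₂ ∧ Disjoint C₁ C₂ ∧
      IsPreconnected C₁ ∧ IsPreconnected C₂ ∧ (γ ∩ C₁).Nonempty ∧ (γ ∩ C₂).Nonempty

/-- `Δ` is one of the closed regions ("closed discs") bounded by the curve `C`:
it is the union of `C` with a connected component of the complement of `C`. -/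
def IsClosedSide {X : Type*} [TopologicalSpace X] (C Δ : Set X) : Prop :=
  ∃ q, q ∉ C ∧ Δ = connectedComponentIn Cᶜ q ∪ C

/-- `Δ` is one of the open regions ("open discs") bounded by the curve `C`. -/
def IsOpenSide {X : Type*} [TopologicalSpace X] (C Δ : Set X) : Prop :=
  ∃ q, q ∉ C ∧ Δ = connectedComponentIn Cᶜ q

/-- `G` is a face (a connected component of the complement) of the point set `A`. -/
def IsFaceOf {X : Type*} [TopologicalSpace X] (A G : Set X) : Prop :=
  ∃ q, q ∉ A ∧ G = connectedComponentIn Aᶜ q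

/-- A good drawing of the complete graph `K_n` in the space `X`. -/
structure GoodDrawing (n : ℕ) (X : Type*) [TopologicalSpace X] where
  vtx : Fin n → X
  arc : Fin n → Fin n → Set X
  vtx_inj : Function.Injective vtx
  arc_symm : ∀ u v, arc u v = arc v u
  isArc : ∀ u v, u ≠ v → ∃ f : ℝ → X, ContinuousOn f (Set.Icc 0 1) ∧
    Set.InjOn f (Set.Icc 0 1) ∧ f 0 = vtx u ∧ f 1 = vtx v ∧ arc u v = f '' Set.Icc 0 1
  vtx_not_mem : ∀ u v w, u ≠ v → w ≠ u → w ≠ v → vtx w ∉ arc u v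
  adj_arcs : ∀ u v w, u ≠ v → u ≠ w → v ≠ w → arc u v ∩ arc u w = {vtx u}
  indep_arcs : ∀ u v x y : Fin n, u ≠ v → x ≠ y → u ≠ x → u ≠ y → v ≠ x → v ≠ y →
    (arc u v ∩ arc x y).Subsingleton ∧
      ∀ p ∈ arc u v ∩ arc x y,
        CrossesAt (arc u v) (arc x y) p ∧ CrossesAt (arc x y) (arc u v) p
  no_triple_pt : ∀ p : X, p ∉ Set.range vtx → ∀ u v x y s t : Fin n,
    u ≠ v → x ≠ y → s ≠ t →
    ({u, v} : Finset (Fin n)) ≠ {x, y} → ({u, v} : Finset (Fin n)) ≠ {s, t} →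
    ({x, y} : Finset (Fin n)) ≠ {s, t} →
    ¬(p ∈ arc u v ∧ p ∈ arc x y ∧ p ∈ arc s t)

namespace GoodDrawing

variable {n : ℕ} {X : Type*} [TopologicalSpace X]

/-- The point set of the subdrawing induced by the set `W` of vertices. -/
def image (D : GoodDrawing n X) (W : Set (Fin n)) : Set X :=
  (D.vtx '' W) ∪ ⋃ u ∈ W, ⋃ v ∈ W, ⋃ (_ : u ≠ v), D.arc u v

/-- The simple closed curve that is the drawing of the 3-cycle on `a`, `b`, `c`. -/
def tri (D : GoodDrawing n X) (a b c : Fin n) : Set X :=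
  D.arc a b ∪ D.arc b c ∪ D.arc a c

/-- `Δ` is convex: it contains the arc between any two vertex points it contains. -/
def ConvexDisc (D : GoodDrawing n X) (Δ : Set X) : Prop :=
  ∀ x y : Fin n, x ≠ y → D.vtx x ∈ Δ → D.vtx y ∈ Δ → D.arc x y ⊆ Δ

/-- `F` is a face of the drawing `D`. -/
def IsFace (D : GoodDrawing n X) (F : Set X) : Prop :=
  IsFaceOf (D.image Set.univ) F

/-- `D` is face-convex with outer face `F`. -/
def FaceConvex (D : GoodDrawing n X) (F : Set X) : Prop :=
  D.IsFace F ∧ ∀ a b c : Fin n, a ≠ b → a ≠ c → b ≠ c →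
    ∀ Δ : Set X, IsClosedSide (D.tri a b c) Δ → ¬F ⊆ Δ → D.ConvexDisc Δ

/-- `D` is a convex drawing: every 3-cycle has at least one convex closed side. -/
def IsConvex (D : GoodDrawing n X) : Prop :=
  ∀ a b c : Fin n, a ≠ b → a ≠ c → b ≠ c →
    ∃ Δ : Set X, IsClosedSide (D.tri a b c) Δ ∧ D.ConvexDisc Δ

/-- The closed curve drawn by the cycle `c 0, c 1, …, c (m-1), c 0` of `K_n`. -/
def cycCurve (D : GoodDrawing n X) {m : ℕ} [NeZero m] (c : Fin m → Fin n) : Set X :=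
  ⋃ i : Fin m, D.arc (c i) (c (i + 1))

/-- `Δ` is the convex hull `Δ_W` of the vertex set `W` (relative to the outer face `F`):
the face of the subdrawing `D[W]` containing `F` is bounded by a cycle `C_W` on vertices
of `W`, and `Δ` is the closed disc bounded by `D[C_W]` disjoint from `F`. -/
def IsHull (D : GoodDrawing n X) (F : Set X) (W : Set (Fin n)) (Δ : Set X) : Prop :=
  ∃ (m : ℕ) (c : Fin (m + 3) → Fin n), Function.Injective c ∧ (∀ i, c i ∈ W) ∧
    (∃ G : Set X, IsFaceOf (D.image W) G ∧ F ⊆ G ∧ frontier G = D.cycCurve c) ∧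
    IsClosedSide (D.cycCurve c) Δ ∧ Disjoint F Δ

/-- The data of the two local sides `C 0`, `C 1` of the arc `D[uv]` at an interior
point `p` of the arc. -/
def LocalSides (D : GoodDrawing n X) (u v : Fin n) (p : X) (C : Fin 2 → Set X) : Prop :=
  p ∈ D.arc u v ∧ p ≠ D.vtx u ∧ p ≠ D.vtx v ∧
    ∃ V ∈ nhds p, C 0 ∪ C 1 = V \ D.arc u v ∧ Disjoint (C 0) (C 1) ∧
      IsPreconnected (C 0) ∧ IsPreconnected (C 1) ∧ (C 0).Nonempty ∧ (C 1).Nonempty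

/-- Relative to the outer face `F` and the local sides `C` of `D[uv]` at `p`, the
vertex `w` is on side `i` of `uv`: the closed disc bounded by `D[{u,v,w}]` not
containing `F` lies locally on side `i` of `D[uv]`. -/
def OnSide (D : GoodDrawing n X) (F : Set X) (u v : Fin n) (p : X) (C : Fin 2 → Set X)
    (i : Fin 2) (w : Fin n) : Prop :=
  w ≠ u ∧ w ≠ v ∧ ∃ Δ : Set X, IsClosedSide (D.tri u v w) Δ ∧ ¬F ⊆ Δ ∧
    ∃ V ∈ nhds p, C i ∩ V ⊆ Δ

/-- `Side(uv, i)`: the set consisting of `u`, `v` and all vertices on side `i` of `uv`. -/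
def SideSet (D : GoodDrawing n X) (F : Set X) (u v : Fin n) (p : X) (C : Fin 2 → Set X)
    (i : Fin 2) : Set (Fin n) :=
  {u, v} ∪ {w : Fin n | D.OnSide F u v p C i w}

/-- The edge-arcs `D[uv]` and `D[xy]` cross: they share a non-vertex point. -/
def Crosses (D : GoodDrawing n X) (u v x y : Fin n) : Prop :=
  ∃ p : X, p ∈ D.arc u v ∩ D.arc x y ∧ p ∉ Set.range D.vtx

/-- The set of empty triangles of `D`: pairs of a 3-set of vertices together with an
open disc bounded by the corresponding triangle containing no vertex point. -/
def emptyTriangles (D : GoodDrawing n X) : Set (Finset (Fin n) × Set X) :=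
  {T | ∃ a b c : Fin n, a ≠ b ∧ a ≠ c ∧ b ≠ c ∧ T.1 = {a, b, c} ∧
    IsOpenSide (D.tri a b c) T.2 ∧ ∀ i, D.vtx i ∉ T.2}

end GoodDrawing

/-- A pseudoline in the plane. -/
def IsPseudoline (σ : Set Plane) : Prop :=
  IsClosed σ ∧ Nonempty (↥σ ≃ₜ ℝ) ∧ ¬IsPreconnected σᶜ

/-- An arrangement of pseudolines: any two distinct members meet in exactly one
point, at which they cross. -/
def IsArrangement (A : Finset (Set Plane)) : Prop :=
  (∀ σ ∈ A, IsPseudoline σ) ∧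
    ∀ σ ∈ A, ∀ τ ∈ A, σ ≠ τ →
      ∃ p : Plane, σ ∩ τ = {p} ∧ CrossesAt σ τ p ∧ CrossesAt τ σ p

/-- A planar good drawing of `K_n` is pseudolinear if some arrangement of pseudolines
contains, for each edge, a distinct pseudoline containing that edge-arc. -/
def GoodDrawing.Pseudolinear {n : ℕ} (D : GoodDrawing n Plane) : Prop :=
  ∃ (A : Finset (Set Plane)) (L : Fin n → Fin n → Set Plane), IsArrangement A ∧
    (∀ u v, u ≠ v → L u v ∈ A ∧ D.arc u v ⊆ L u v) ∧
    (∀ u v, L u v = L v u) ∧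
    ∀ u v x y : Fin n, u ≠ v → x ≠ y →
      ({u, v} : Finset (Fin n)) ≠ {x, y} → L u v ≠ L x y

/-- An arrangement of arcs: a finite family of simple open arcs (closed subsets of the
plane homeomorphic to `ℝ`) each disconnecting the plane, any two distinct members of
which have at most one common point, at which they cross. -/
def IsArcArrangement (A : Finset (Set Plane)) : Prop :=
  (∀ σ ∈ A, IsClosed σ ∧ Nonempty (↥σ ≃ₜ ℝ) ∧ ¬IsPreconnected σᶜ) ∧
    ∀ σ ∈ A, ∀ τ ∈ A, σ ≠ τ → (σ ∩ τ).Subsingleton ∧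
      ∀ p ∈ σ ∩ τ, CrossesAt σ τ p ∧ CrossesAt τ σ p

/-!
Two points `a` and `b` lie in the same face of a closed set `K ⊆ ℂ` if and only if
`z ↦ (z - a) / (z - b)` has a continuous logarithm on `K` which tends to `0` at infinity (Borsuk's
criterion). If every arc of the arrangement leaves `a` and `b` in one face, then each arc carries
such a logarithm. At a crossing of two arcs the two logarithms agree: one half of the second arc
avoids the face of the first arc that contains `a` and `b`, and a logarithm off this face agrees
with both. So they glue to a logarithm on the union of the arcs, and finitely many further points
are harmless:
`a` and `b` lie in one face of the arcs that do not separate them together with all multiple points.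

Consequently, if `a` and `b` lie in different faces of the whole arrangement, then the closure of
the face of `a` contains a point `p` that lies on a single arc `σ`, and `σ` separates `a` from `b`.
By the same criterion the plane near `p` is cut by `σ` into two sides, and each side contains an arc
ending at `p`. Passing through `p` leads to a face from which `b` is separated by fewer arcs, and
induction finishes the construction without ever meeting an arc twice.
-/

open Filter

/-! ### Faces -/

section Faces

variable {X : Type*} [TopologicalSpace X] {K L : Set X} {a b c : X}

/-- `a` and `b` lie in the same face of `K`, that is, in the same connected component of `Kᶜ`.
As `connectedComponentIn Kᶜ a` is empty for `a ∈ K`, neither point then lies on `K`. -/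
def SameFace (K : Set X) (a b : X) : Prop :=
  b ∈ connectedComponentIn Kᶜ a

namespace SameFace

lemma left_notMem (h : SameFace K a b) : a ∉ K :=
  mem_compl_iff K a |>.1 <| connectedComponentIn_nonempty_iff.1 ⟨b, h⟩

lemma right_notMem (h : SameFace K a b) : b ∉ K :=
  connectedComponentIn_subset _ _ h

lemma refl (ha : a ∉ K) : SameFace K a a :=
  mem_connectedComponentIn ha

lemma of_isPreconnected {C : Set X} (hC : IsPreconnected C) (hCK : Disjoint C K) (ha : a ∈ C)
    (hb : b ∈ C) : SameFace K a b :=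
  hC.subset_connectedComponentIn ha hCK.subset_compl_right hb

lemma symm (h : SameFace K a b) : SameFace K b a := by
  rw [SameFace, ← connectedComponentIn_eq h]
  exact refl h.left_notMem

lemma trans (h : SameFace K a b) (h' : SameFace K b c) : SameFace K a c := by
  rwa [SameFace, connectedComponentIn_eq h]

lemma anti (hLK : L ⊆ K) (h : SameFace K a b) : SameFace L a b :=
  connectedComponentIn_mono a (compl_subset_compl.2 hLK) h

end SameFace

lemma exists_not_sameFace (hK : ¬IsPreconnected Kᶜ) (a : X) : ∃ b ∉ K, ¬SameFace K a b := by
  by_contra! h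
  have heq : connectedComponentIn Kᶜ a = Kᶜ := (connectedComponentIn_subset _ _).antisymm h
  exact hK (heq ▸ isPreconnected_connectedComponentIn)

lemma frontier_connectedComponentIn_compl_subset [LocallyConnectedSpace X] (hK : IsClosed K)
    (a : X) : frontier (connectedComponentIn Kᶜ a) ⊆ K := by
  intro x hx
  by_contra hxK
  have hopen : ∀ y, IsOpen (connectedComponentIn Kᶜ y) := fun y ↦
    hK.isOpen_compl.connectedComponentIn
  obtain ⟨y, hxy, hay⟩ := mem_closure_iff.1 (frontier_subset_closure hx) _ (hopen x)
    (mem_connectedComponentIn hxK)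
  rw [(hopen a).frontier_eq] at hx
  exact hx.2 (SameFace.trans hay (SameFace.symm hxy))

lemma SameFace.of_mem_closure [LocallyConnectedSpace X] (hK : IsClosed K) (hb : b ∉ K)
    (h : b ∈ closure (connectedComponentIn Kᶜ a)) : SameFace K a b := by
  rw [closure_eq_self_union_frontier] at h
  exact h.resolve_right fun h ↦ hb (frontier_connectedComponentIn_compl_subset hK a h)

lemma SameFace.exists_mem_closure_face [LocallyConnectedSpace X] (h : SameFace L a b)
    (hK : IsClosed K) (ha : a ∉ K) (hab : ¬SameFace K a b) :
    ∃ p ∈ K, p ∈ closure (connectedComponentIn Kᶜ a) ∧ SameFace L a p := by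
  by_contra! hfar
  refine hab (isPreconnected_connectedComponentIn.subset_of_closure_inter_subset
    hK.isOpen_compl.connectedComponentIn ⟨a, refl h.left_notMem, refl ha⟩ ?_ h)
  rintro p ⟨hpK, hpL⟩
  by_contra hp
  exact hfar p (by_contra fun hpK' ↦ hp (of_mem_closure hK hpK' hpK)) hpK hpL

end Faces

/-! ### Logarithms vanishing at infinity -/

lemma exists_continuous_log {X : Type*} [TopologicalSpace X] [SimplyConnectedSpace X]
    [LocallyPathConnectedSpace X] {u : X → ℂ} (hu : Continuous u) (hu₀ : ∀ x, u x ≠ 0) :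
    ∃ f : X → ℂ, Continuous f ∧ ∀ x, Complex.exp (f x) = u x := by
  obtain ⟨x₀⟩ : Nonempty X := inferInstance
  obtain ⟨f, ⟨-, hf⟩, -⟩ := Complex.isCoveringMapOn_exp.existsUnique_continuousMap_lifts
    (⟨u, hu⟩ : C(X, ℂ)) (a₀ := x₀) (e₀ := Complex.log (u x₀)) (Complex.exp_log (hu₀ x₀)) hu₀
  exact ⟨f, f.continuous, congrFun hf⟩

lemma eqOn_of_exp_eqOn {X : Type*} [TopologicalSpace X] {s : Set X} (hs : IsPreconnected s)
    {f g : X → ℂ} (hf : ContinuousOn f s) (hg : ContinuousOn g s)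
    (h : ∀ x ∈ s, Complex.exp (f x) = Complex.exp (g x)) {x₀ : X} (hx₀ : x₀ ∈ s)
    (h₀ : f x₀ = g x₀) : EqOn f g s :=
  Complex.isCoveringMap_exp.eqOn_of_comp_eqOn hs hf hg (fun x hx ↦ Subtype.ext (h x hx)) hx₀ h₀

lemma eq_of_exp_eq_of_norm_lt_pi {z w : ℂ} (hz : ‖z‖ < Real.pi) (hw : ‖w‖ < Real.pi)
    (h : Complex.exp z = Complex.exp w) : z = w := by
  have hz' := abs_lt.1 ((Complex.abs_im_le_norm z).trans_lt hz)
  have hw' := abs_lt.1 ((Complex.abs_im_le_norm w).trans_lt hw)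
  exact Complex.exp_inj_of_neg_pi_lt_of_le_pi hz'.1 hz'.2.le hw'.1 hw'.2.le h

lemma map_cocompact_inf_principal {X Y : Type*} [TopologicalSpace X] [TopologicalSpace Y]
    {φ : Y → X} (hφ : IsClosedEmbedding φ) (S : Set Y) :
    map φ (cocompact Y ⊓ 𝓟 S) = cocompact X ⊓ 𝓟 (φ '' S) := by
  have hcomap : cocompact Y ⊓ 𝓟 S = comap φ (cocompact X ⊓ 𝓟 (φ '' S)) := by
    rw [comap_inf, comap_principal, preimage_image_eq S hφ.injective,
      (comap_cocompact_le hφ.continuous).antisymm hφ.tendsto_cocompact.le_comap]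
  rw [hcomap, map_comap, inf_assoc, inf_principal, inter_eq_left.2 (image_subset_range φ S)]

section VanishingLog

variable {X : Type*} [TopologicalSpace X] {f g u v : X → ℂ} {K L : Set X}

/-- `f` is a continuous logarithm of `u` on `K` that tends to `0` at infinity along `K`. Away from
compact sets such a logarithm is the principal one, so it plays the role of a logarithm on the
one-point compactification of `K` that is normalised at the added point. -/
structure IsVanishingLog (f u : X → ℂ) (K : Set X) : Prop where
  continuousOn : ContinuousOn f K
  exp_eq : ∀ x ∈ K, Complex.exp (f x) = u x
  tendsto : Tendsto f (cocompact X ⊓ 𝓟 K) (𝓝 0)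

namespace IsVanishingLog

lemma mono (hf : IsVanishingLog f u K) (hLK : L ⊆ K) : IsVanishingLog f u L where
  continuousOn := hf.continuousOn.mono hLK
  exp_eq x hx := hf.exp_eq x (hLK hx)
  tendsto := hf.tendsto.mono_left (inf_le_inf_left _ (principal_mono.2 hLK))

lemma congr (hf : IsVanishingLog f u K) (huv : EqOn u v K) : IsVanishingLog f v K where
  continuousOn := hf.continuousOn
  exp_eq x hx := (hf.exp_eq x hx).trans (huv hx)
  tendsto := hf.tendsto

lemma exists_continuous [NormalSpace X] (hf : IsVanishingLog f u K) (hK : IsClosed K) :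
    ∃ F, Continuous F ∧ IsVanishingLog F u K := by
  obtain ⟨F, hF⟩ := ContinuousMap.exists_restrict_eq hK
    ⟨_, continuousOn_iff_continuous_domRestrict.1 hf.continuousOn⟩
  have hFf : EqOn F f K := fun x hx ↦ DFunLike.congr_fun hF ⟨x, hx⟩
  refine ⟨F, F.continuous, F.continuous.continuousOn, fun x hx ↦ ?_, hf.tendsto.congr' ?_⟩
  · rw [hFf hx, hf.exp_eq x hx]
  · exact (hFf.eventuallyEq_of_mem (mem_inf_of_right (mem_principal_self K))).symm

lemma mul (hf : IsVanishingLog f u K) (hg : IsVanishingLog g v K) :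
    IsVanishingLog (f + g) (u * v) K where
  continuousOn := hf.continuousOn.add hg.continuousOn
  exp_eq x hx := by simp [Complex.exp_add, hf.exp_eq x hx, hg.exp_eq x hx]
  tendsto := add_zero (0 : ℂ) ▸ hf.tendsto.add hg.tendsto

lemma zpow (hf : IsVanishingLog f u K) (n : ℤ) : IsVanishingLog (n • f) (u ^ n) K where
  continuousOn := hf.continuousOn.const_smul n
  exp_eq x hx := by simp [← hf.exp_eq x hx, ← Complex.exp_int_mul]
  tendsto := smul_zero (A := ℂ) n ▸ hf.tendsto.const_smul n

lemma eventuallyEq (hf : IsVanishingLog f u K) (hg : IsVanishingLog g u K) :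
    f =ᶠ[cocompact X ⊓ 𝓟 K] g := by
  have small : ∀ {h : X → ℂ}, IsVanishingLog h u K →
      ∀ᶠ x in cocompact X ⊓ 𝓟 K, ‖h x‖ < Real.pi := fun hh ↦
    hh.tendsto.norm.eventually_lt_const (by simpa using Real.pi_pos)
  filter_upwards [small hf, small hg, mem_inf_of_right (mem_principal_self K)] with x hfx hgx hx
  exact eq_of_exp_eq_of_norm_lt_pi hfx hgx ((hf.exp_eq x hx).trans (hg.exp_eq x hx).symm)

lemma eqOn (hf : IsVanishingLog f u K) (hg : IsVanishingLog g u K) (hK : IsPreconnected K)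
    [(cocompact X ⊓ 𝓟 K).NeBot] : EqOn f g K := by
  obtain ⟨x, hfg, hx⟩ :=
    ((hf.eventuallyEq hg).and (mem_inf_of_right (mem_principal_self K))).exists
  exact eqOn_of_exp_eqOn hK hf.continuousOn hg.continuousOn
    (fun y hy ↦ (hf.exp_eq y hy).trans (hg.exp_eq y hy).symm) hx hfg

lemma exists_iUnion {ι : Type*} [Finite ι] {K : ι → Set X} (hK : ∀ i, IsClosed (K i))
    {f : ι → X → ℂ} (hf : ∀ i, IsVanishingLog (f i) u (K i))
    (hfK : ∀ i j, EqOn (f i) (f j) (K i ∩ K j)) :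
    ∃ F, IsVanishingLog F u (⋃ i, K i) ∧ ∀ i, EqOn F (f i) (K i) := by
  classical
  let F : X → ℂ := fun x ↦ if h : ∃ i, x ∈ K i then f h.choose x else 0
  have hF : ∀ i, EqOn F (f i) (K i) := fun i x hx ↦ by
    have h : ∃ i, x ∈ K i := ⟨i, hx⟩
    simpa only [F, dif_pos h] using hfK _ i ⟨h.choose_spec, hx⟩
  refine ⟨F, ⟨?_, ?_, ?_⟩, hF⟩
  · exact (locallyFinite_of_finite K).continuousOn_iUnion hK
      fun {i} ↦ (hf i).continuousOn.congr (hF i)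
  · rintro x hx
    obtain ⟨i, hi⟩ := mem_iUnion.1 hx
    rw [hF i hi, (hf i).exp_eq x hi]
  · intro U hU
    have hev : ∀ i, ∀ᶠ x in cocompact X, x ∈ K i → f i x ∈ U := fun i ↦
      eventually_inf_principal.1 ((hf i).tendsto hU)
    refine eventually_inf_principal.2 ((eventually_all.2 hev).mono fun x hx hxK ↦ ?_)
    obtain ⟨i, hi⟩ := mem_iUnion.1 hxK
    simpa only [mem_preimage, hF i hi] using hx i hi

lemma exists_union (hK : IsClosed K) (hL : IsClosed L) (hf : IsVanishingLog f u K)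
    (hg : IsVanishingLog g u L) (hfg : EqOn f g (K ∩ L)) :
    ∃ F, IsVanishingLog F u (K ∪ L) ∧ EqOn F f K ∧ EqOn F g L := by
  obtain ⟨F, hF, hFi⟩ := exists_iUnion (u := u) (K := fun i ↦ cond i K L)
    (f := fun i ↦ cond i f g) (Bool.forall_bool.2 ⟨hL, hK⟩) (Bool.forall_bool.2 ⟨hg, hf⟩)
    (by simpa [Bool.forall_bool, EqOn] using ⟨fun x hL hK ↦ (hfg ⟨hK, hL⟩).symm,
      fun x hK hL ↦ hfg ⟨hK, hL⟩⟩)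
  rw [← union_eq_iUnion] at hF
  exact ⟨F, hF, hFi true, hFi false⟩

lemma log (hu : ContinuousOn u K) (huK : MapsTo u K Complex.slitPlane)
    (hu₁ : Tendsto u (cocompact X ⊓ 𝓟 K) (𝓝 1)) :
    IsVanishingLog (fun x ↦ Complex.log (u x)) u K where
  continuousOn := hu.clog huK
  exp_eq x hx := Complex.exp_log (Complex.slitPlane_ne_zero (huK hx))
  tendsto := by simpa using hu₁.clog Complex.one_mem_slitPlane

lemma log_of_finite [T1Space X] (hK : K.Finite) (hu : ∀ x ∈ K, u x ≠ 0) :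
    IsVanishingLog (fun x ↦ Complex.log (u x)) u K where
  continuousOn := hK.continuousOn _
  exp_eq x hx := Complex.exp_log (hu x hx)
  tendsto := by
    rw [(disjoint_principal_right.2 hK.isCompact.compl_mem_cocompact).eq_bot]
    exact tendsto_bot

lemma extend {Y : Type*} [TopologicalSpace Y] {φ : Y → X} (hφ : IsClosedEmbedding φ) {S : Set Y}
    {f : Y → ℂ} (hf : IsVanishingLog f (u ∘ φ) S) :
    IsVanishingLog (Function.extend φ f 0) u (φ '' S) where
  continuousOn := by
    rintro - ⟨y, hy, rfl⟩
    rw [ContinuousWithinAt, ← hφ.isEmbedding.map_nhdsWithin_eq, tendsto_map'_iff,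
      Function.extend_comp hφ.injective, hφ.injective.extend_apply]
    exact hf.continuousOn y hy
  exp_eq := by
    rintro - ⟨y, hy, rfl⟩
    rw [hφ.injective.extend_apply]
    exact hf.exp_eq y hy
  tendsto := by
    rw [← map_cocompact_inf_principal hφ S, tendsto_map'_iff, Function.extend_comp hφ.injective]
    exact hf.tendsto

end IsVanishingLog

end VanishingLog

/-! ### The Borsuk criterion in the plane -/

/-- The Möbius function `z ↦ (z - a) / (z - b)` with zero `a` and pole `b`. Division by zero gives
it the value `0` at `b`. -/
def pointRatio (a b z : ℂ) : ℂ :=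
  (z - a) / (z - b)

section PointRatio

variable {a b c z : ℂ} {K : Set ℂ}

lemma inv_pointRatio (a b : ℂ) : (pointRatio a b)⁻¹ = pointRatio b a :=
  funext fun _ ↦ inv_div _ _

lemma pointRatio_mul_pointRatio (hz : z ≠ b) :
    pointRatio a b z * pointRatio b c z = pointRatio a c z :=
  div_mul_div_cancel₀ (sub_ne_zero.2 hz)

lemma pointRatio_ne_zero (ha : z ≠ a) (hb : z ≠ b) : pointRatio a b z ≠ 0 :=
  div_ne_zero (sub_ne_zero.2 ha) (sub_ne_zero.2 hb)

lemma continuousAt_pointRatio (hz : z ≠ b) : ContinuousAt (pointRatio a b) z :=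
  (continuousAt_id.sub continuousAt_const).div (continuousAt_id.sub continuousAt_const)
    (sub_ne_zero.2 hz)

lemma pointRatio_eq_one_add (hz : z ≠ b) : pointRatio a b z = 1 + (b - a) / (z - b) := by
  rw [pointRatio, ← sub_add_sub_cancel z b a, add_div, div_self (sub_ne_zero.2 hz)]

lemma pointRatio_mem_slitPlane (hz : ‖a - b‖ < ‖z - b‖) :
    pointRatio a b z ∈ Complex.slitPlane := by
  have hpos : 0 < ‖z - b‖ := (norm_nonneg _).trans_lt hz
  rw [pointRatio_eq_one_add (sub_ne_zero.1 (norm_pos_iff.1 hpos))]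
  apply Complex.mem_slitPlane_of_norm_lt_one
  rwa [norm_div, div_lt_one hpos, norm_sub_rev]

lemma tendsto_pointRatio_cocompact (a b : ℂ) :
    Tendsto (pointRatio a b) (cocompact ℂ) (𝓝 1) := by
  have hinv : Tendsto (fun z ↦ (z - b)⁻¹) (cocompact ℂ) (𝓝 0) := by
    rw [← Metric.cobounded_eq_cocompact]
    refine tendsto_inv₀_cobounded.comp ?_
    rw [Metric.cobounded_eq_cocompact]
    exact (Homeomorph.subRight b).isClosedEmbedding.tendsto_cocompact
  have hlim : Tendsto (fun z ↦ 1 + (b - a) * (z - b)⁻¹) (cocompact ℂ) (𝓝 1) := by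
    simpa using (hinv.const_mul (b - a)).const_add 1
  refine hlim.congr' ?_
  filter_upwards [isCompact_singleton.compl_mem_cocompact] with z hz
  rw [pointRatio_eq_one_add hz, div_eq_mul_inv]

namespace IsVanishingLog

variable {f g : ℂ → ℂ}

lemma left_notMem (hf : IsVanishingLog f (pointRatio a b) K) : a ∉ K := fun ha ↦
  Complex.exp_ne_zero (f a) (by simp [hf.exp_eq a ha, pointRatio])

lemma right_notMem (hf : IsVanishingLog f (pointRatio a b) K) : b ∉ K := fun hb ↦
  Complex.exp_ne_zero (f b) (by simp [hf.exp_eq b hb, pointRatio])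

lemma symm (hf : IsVanishingLog f (pointRatio a b) K) :
    IsVanishingLog ((-1 : ℤ) • f) (pointRatio b a) K := by
  simpa only [zpow_neg_one, inv_pointRatio] using hf.zpow (-1)

lemma trans (hf : IsVanishingLog f (pointRatio a b) K) (hg : IsVanishingLog g (pointRatio b c) K) :
    IsVanishingLog (f + g) (pointRatio a c) K :=
  (hf.mul hg).congr fun _ hz ↦ pointRatio_mul_pointRatio (ne_of_mem_of_not_mem hz hf.right_notMem)

end IsVanishingLog

lemma isVanishingLog_log_pointRatio (h : ∀ z ∈ K, ‖a - b‖ < ‖z - b‖) :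
    IsVanishingLog (fun z ↦ Complex.log (pointRatio a b z)) (pointRatio a b) K :=
  .log
    (fun z hz ↦ (continuousAt_pointRatio <| sub_ne_zero.1 <| norm_pos_iff.1 <|
      (norm_nonneg _).trans_lt (h z hz)).continuousWithinAt)
    (fun z hz ↦ pointRatio_mem_slitPlane (h z hz))
    ((tendsto_pointRatio_cocompact a b).mono_left inf_le_left)

end PointRatio

lemma map_add_two_pi_I_sub_of_exp_eq {L u : ℂ → ℂ} {b : ℂ} {ρ : ℝ} {k : ℤ}
    (hL : Continuous L) (hu : ContinuousOn u (Metric.sphere b (Real.exp ρ)))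
    (hLu : ∀ z : ℂ, z.re = ρ →
      Complex.exp (L z) = Complex.exp (u (b + Complex.exp z)) * Complex.exp z ^ k) :
    L (ρ + 2 * Real.pi * Complex.I) - L ρ = k * (2 * Real.pi * Complex.I) := by
  let line : ℝ → ℂ := fun θ ↦ ρ + θ * Complex.I
  have hline : Continuous line := by fun_prop
  have hre : ∀ θ, (line θ).re = ρ := fun θ ↦ by simp [line]
  have hucont : Continuous fun θ ↦ u (b + Complex.exp (line θ)) :=
    hu.comp_continuous (by fun_prop) fun θ ↦ by simp [Complex.norm_exp, hre]
  let c := L ρ - (u (b + Complex.exp ρ) + k * ρ)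
  have hexp : ∀ θ, Complex.exp (L (line θ)) =
      Complex.exp (u (b + Complex.exp (line θ)) + k * line θ) := fun θ ↦ by
    rw [hLu _ (hre θ), Complex.exp_add (u _), Complex.exp_int_mul]
  have hc : Complex.exp c = 1 := by
    have h := hexp 0
    simp only [line, Complex.ofReal_zero, zero_mul, add_zero] at h
    rw [Complex.exp_sub, h, div_self (Complex.exp_ne_zero _)]
  have heq := eqOn_of_exp_eqOn isPreconnected_univ (f := fun θ ↦ L (line θ))
    (g := fun θ ↦ u (b + Complex.exp (line θ)) + k * line θ + c)
    (by fun_prop) ((hucont.add (by fun_prop)).add continuous_const).continuousOn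
    (fun θ _ ↦ by rw [Complex.exp_add _ c, hc, mul_one, hexp])
    (mem_univ 0) (by simp [line, c]) (mem_univ (2 * Real.pi))
  have hper : Complex.exp (ρ + 2 * Real.pi * Complex.I) = Complex.exp ρ := by
    rw [Complex.exp_add, Complex.exp_two_pi_mul_I, mul_one]
  simp only [line, c, Complex.ofReal_mul, Complex.ofReal_ofNat, hper] at heq
  rw [heq]
  ring

/-- The two exponents are the winding numbers of `h` along the two circles. -/
lemma exponent_eq_of_exp_mul_zpow_eq {h u v : ℂ → ℂ} {b : ℂ} {r R : ℝ} {k l : ℤ} (hr : 0 < r)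
    (hR : 0 < R) (hh : ContinuousOn h {b}ᶜ) (h₀ : ∀ z ≠ b, h z ≠ 0)
    (hu : ContinuousOn u (Metric.sphere b r)) (hv : ContinuousOn v (Metric.sphere b R))
    (hhu : ∀ z ∈ Metric.sphere b r, h z = Complex.exp (u z) * (z - b) ^ k)
    (hhv : ∀ z ∈ Metric.sphere b R, h z = Complex.exp (v z) * (z - b) ^ l) : k = l := by
  obtain ⟨ρ, rfl⟩ : ∃ ρ, Real.exp ρ = r := ⟨_, Real.exp_log hr⟩
  obtain ⟨P, rfl⟩ : ∃ P, Real.exp P = R := ⟨_, Real.exp_log hR⟩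
  have hne : ∀ z, b + Complex.exp z ≠ b := fun z ↦ by simp [Complex.exp_ne_zero]
  obtain ⟨L, hL, hLexp⟩ := exists_continuous_log (u := fun z ↦ h (b + Complex.exp z))
    (hh.comp_continuous (by fun_prop) hne) fun z ↦ h₀ _ (hne z)
  have hper : ∀ z : ℂ, Complex.exp (L (z + 2 * Real.pi * Complex.I) - L z) = 1 := fun z ↦ by
    rw [Complex.exp_sub, hLexp, hLexp, Complex.exp_add, Complex.exp_two_pi_mul_I, mul_one,
      div_self (h₀ _ (hne z))]
  have hconst := eqOn_of_exp_eqOn isPreconnected_univ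
    (f := fun z ↦ L (z + 2 * Real.pi * Complex.I) - L z)
    (g := fun _ ↦ L (ρ + 2 * Real.pi * Complex.I) - L ρ) (by fun_prop) (by fun_prop)
    (fun z _ ↦ by rw [hper, hper]) (mem_univ (ρ : ℂ)) rfl (mem_univ (P : ℂ))
  have hk := map_add_two_pi_I_sub_of_exp_eq hL hu (k := k) fun z hz ↦ by
    rw [hLexp, hhu _ (by simp [Complex.norm_exp, hz]), add_sub_cancel_left]
  have hl := map_add_two_pi_I_sub_of_exp_eq hL hv (k := l) fun z hz ↦ by
    rw [hLexp, hhv _ (by simp [Complex.norm_exp, hz]), add_sub_cancel_left]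
  simp only at hconst
  rw [hk, hl] at hconst
  exact_mod_cast (mul_right_cancel₀ Complex.two_pi_I_ne_zero hconst).symm

lemma exists_log_pointRatio_zpow_on_sphere {a b : ℂ} {r : ℝ} (hr : r < ‖a - b‖) (hr₀ : 0 < r)
    (k : ℤ) : ∃ u : ℂ → ℂ, ContinuousOn u (Metric.sphere b r) ∧
      ∀ z ∈ Metric.sphere b r, pointRatio a b z ^ k = Complex.exp (u z) * (z - b) ^ (-k) := by
  have hba : b - a ≠ 0 := by
    rw [← norm_pos_iff, norm_sub_rev]
    exact hr₀.trans hr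
  have hslit : ∀ z ∈ Metric.sphere b r, (z - a) / (b - a) ∈ Complex.slitPlane := fun z hz ↦ by
    have heq : (z - a) / (b - a) = 1 + (z - b) / (b - a) := by field_simp; ring
    rw [heq]
    apply Complex.mem_slitPlane_of_norm_lt_one
    rwa [norm_div, mem_sphere_iff_norm.1 hz, div_lt_one (norm_pos_iff.2 hba), norm_sub_rev]
  refine ⟨fun z ↦ k * (Complex.log ((z - a) / (b - a)) + Complex.log (b - a)),
    continuousOn_const.mul (((by fun_prop : ContinuousOn _ _).clog hslit).add continuousOn_const),
    fun z hz ↦ ?_⟩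
  rw [Complex.exp_int_mul, Complex.exp_add, Complex.exp_log hba,
    Complex.exp_log (Complex.slitPlane_ne_zero (hslit z hz)), div_mul_cancel₀ _ hba, zpow_neg,
    ← div_eq_mul_inv, pointRatio, div_zpow]

lemma exists_sphere_forall_of_eventually_cocompact {E : Type*} [SeminormedAddCommGroup E]
    [ProperSpace E] {P : E → Prop} (h : ∀ᶠ x in cocompact E, P x) (b : E) :
    ∃ R > 0, ∀ x ∈ Metric.sphere b R, P x := by
  rw [← Metric.cobounded_eq_cocompact] at h
  obtain ⟨R, -, hR⟩ := (Metric.hasBasis_cobounded_compl_closedBall b).mem_iff.1 h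
  refine ⟨|R| + 1, by positivity, fun x hx ↦ hR ?_⟩
  rw [mem_compl_iff, Metric.mem_closedBall, Metric.mem_sphere.1 hx, not_le]
  linarith [le_abs_self R]

section Degree

variable {W : Set ℂ} {a b : ℂ} {f g : ℂ → ℂ} {k : ℤ}

lemma IsVanishingLog.eventually_eq_zsmul_log_add_log
    (hf : IsVanishingLog f (pointRatio a b ^ k * g) (frontier W)) (hg : ContinuousOn g (closure W))
    (hg₁ : Tendsto g (cocompact ℂ) (𝓝 1)) :
    ∀ᶠ z in cocompact ℂ, ‖a - b‖ < ‖z - b‖ ∧ g z ∈ Complex.slitPlane ∧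
      (z ∈ frontier W → f z = k • Complex.log (pointRatio a b z) + Complex.log (g z)) := by
  let T : Set ℂ := {z | ‖a - b‖ < ‖z - b‖ ∧ g z ∈ Complex.slitPlane}
  have hT : ∀ᶠ z in cocompact ℂ, z ∈ T := by
    refine .and ?_ (hg₁ (Complex.isOpen_slitPlane.mem_nhds Complex.one_mem_slitPlane))
    filter_upwards [(isCompact_closedBall b ‖a - b‖).compl_mem_cocompact] with z hz
    simpa [dist_eq_norm] using hz
  have hlog : IsVanishingLog
      (k • (fun z ↦ Complex.log (pointRatio a b z)) + fun z ↦ Complex.log (g z))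
      (pointRatio a b ^ k * g) (frontier W ∩ T) :=
    ((isVanishingLog_log_pointRatio fun z hz ↦ hz.2.1).zpow k).mul <|
      .log (hg.mono (inter_subset_left.trans frontier_subset_closure)) (fun z hz ↦ hz.2.2)
        (hg₁.mono_left inf_le_left)
  have heq := eventually_inf_principal.1 ((hf.mono inter_subset_left).eventuallyEq hlog)
  filter_upwards [hT, heq] with z hz hzeq
  exact ⟨hz.1, hz.2, fun hzW ↦ hzeq ⟨hzW, hz⟩⟩

lemma exists_log_on_large_sphere (hf : Continuous f)
    (hflog : IsVanishingLog f (pointRatio a b ^ k * g) (frontier W))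
    (hg : ContinuousOn g (closure W)) (hg₁ : Tendsto g (cocompact ℂ) (𝓝 1)) :
    ∃ R > 0, ∃ v : ℂ → ℂ, ContinuousOn v (Metric.sphere b R) ∧ ∀ z ∈ Metric.sphere b R,
      (z ∈ W → Complex.exp (f z) / g z = Complex.exp (v z)) ∧
      (z ∉ W → pointRatio a b z ^ k = Complex.exp (v z)) := by
  classical
  obtain ⟨R, hR, hfar⟩ := exists_sphere_forall_of_eventually_cocompact
    (hflog.eventually_eq_zsmul_log_add_log hg hg₁) b
  have hlog := isVanishingLog_log_pointRatio fun z hz ↦ (hfar z hz).1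
  refine ⟨R, hR, W.piecewise (fun z ↦ f z - Complex.log (g z))
    (k • fun z ↦ Complex.log (pointRatio a b z)), ContinuousOn.piecewise ?_ ?_ ?_,
    fun z hz ↦ ⟨fun hzW ↦ ?_, fun hzW ↦ ?_⟩⟩
  · exact fun z hz ↦ sub_eq_iff_eq_add.2 ((hfar z hz.1).2.2 hz.2)
  · exact hf.continuousOn.sub ((hg.mono inter_subset_right).clog fun z hz ↦ (hfar z hz.1).2.1)
  · exact (hlog.zpow k).continuousOn.mono inter_subset_left
  · rw [piecewise_eq_of_mem _ _ _ hzW, Complex.exp_sub,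
      Complex.exp_log (Complex.slitPlane_ne_zero (hfar z hz).2.1)]
  · rw [piecewise_eq_of_notMem _ _ _ hzW, (hlog.zpow k).exp_eq z hz, Pi.pow_apply]

lemma exists_continuousOn_compl_singleton_of_frontier (hW : IsOpen W) (ha : a ∈ W)
    (hg : ContinuousOn g (closure W)) (hg₀ : ∀ z ∈ closure W, g z ≠ 0) (hf : Continuous f)
    (hfr : ∀ z ∈ frontier W, Complex.exp (f z) = pointRatio a b z ^ k * g z) :
    ∃ h : ℂ → ℂ, ContinuousOn h {b}ᶜ ∧ (∀ z ≠ b, h z ≠ 0) ∧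
      (∀ z ∈ W, h z = Complex.exp (f z) / g z) ∧ ∀ z ∉ W, h z = pointRatio a b z ^ k := by
  classical
  have hne : ∀ z ∉ W, z ≠ a := fun z hz ↦ (ne_of_mem_of_not_mem ha hz).symm
  refine ⟨W.piecewise (fun z ↦ Complex.exp (f z) / g z) fun z ↦ pointRatio a b z ^ k,
    ContinuousOn.piecewise (fun z hz ↦ ?_) ?_ fun z ⟨hzb, hzW⟩ ↦ ?_, fun z hzb ↦ ?_,
    fun z hz ↦ piecewise_eq_of_mem _ _ _ hz, fun z hz ↦ piecewise_eq_of_notMem _ _ _ hz⟩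
  · rw [hfr z hz.2, mul_div_cancel_right₀ _ (hg₀ z (frontier_subset_closure hz.2))]
  · exact (hf.cexp.continuousOn.div hg hg₀).mono inter_subset_right
  · rw [hW.isClosed_compl.closure_eq] at hzW
    exact ((continuousAt_pointRatio hzb).zpow₀ k
      (.inl (pointRatio_ne_zero (hne z hzW) hzb))).continuousWithinAt
  · by_cases hzW : z ∈ W
    · simp [hzW, hg₀ z (subset_closure hzW)]
    · simp [hzW, zpow_ne_zero k (pointRatio_ne_zero (hne z hzW) hzb)]

lemma IsVanishingLog.zpow_exponent_eq_zero (hW : IsOpen W) (ha : a ∈ W) (hb : b ∉ closure W)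
    (hg : ContinuousOn g (closure W)) (hg₀ : ∀ z ∈ closure W, g z ≠ 0)
    (hg₁ : Tendsto g (cocompact ℂ) (𝓝 1))
    (hf : IsVanishingLog f (pointRatio a b ^ k * g) (frontier W)) : k = 0 := by
  obtain ⟨F, hFcont, hF⟩ := hf.exists_continuous isClosed_frontier
  obtain ⟨h, hcont, h₀, h_in, h_out⟩ :=
    exists_continuousOn_compl_singleton_of_frontier hW ha hg hg₀ hFcont hF.exp_eq
  have hab : 0 < ‖a - b‖ := norm_sub_pos_iff.2 fun h ↦ hb (subset_closure (h ▸ ha))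
  obtain ⟨r, hr, hrW⟩ := Metric.mem_nhds_iff.1 (isClosed_closure.isOpen_compl.mem_nhds hb)
  obtain ⟨s, hs₀, hs⟩ := exists_between (lt_min hr hab)
  obtain ⟨hsr, hsab⟩ := lt_min_iff.1 hs
  obtain ⟨u, hu, hhu⟩ := exists_log_pointRatio_zpow_on_sphere hsab hs₀ k
  obtain ⟨R, hR, v, hv, hhv⟩ := exists_log_on_large_sphere hFcont hF hg hg₁
  refine neg_eq_zero.1 (exponent_eq_of_exp_mul_zpow_eq (l := 0) hs₀ hR hcont h₀ hu hv ?_ ?_)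
  · intro z hz
    have hzW : z ∉ W := fun hzW ↦
      hrW (Metric.sphere_subset_ball hsr hz) (subset_closure hzW)
    rw [← hhu z hz, h_out z hzW]
  · intro z hz
    rw [zpow_zero, mul_one]
    by_cases hzW : z ∈ W
    · rw [← (hhv z hz).1 hzW, h_in z hzW]
    · rw [← (hhv z hz).2 hzW, h_out z hzW]

end Degree

section Borsuk

variable {K : Set ℂ} {a b : ℂ}

lemma sameFace_of_isVanishingLog (hK : IsClosed K) {f : ℂ → ℂ}
    (hf : IsVanishingLog f (pointRatio a b) K) : SameFace K a b := by
  by_contra hab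
  refine one_ne_zero (IsVanishingLog.zpow_exponent_eq_zero (k := 1) (g := 1)
    hK.isOpen_compl.connectedComponentIn (mem_connectedComponentIn hf.left_notMem)
    (fun h ↦ hab (.of_mem_closure hK hf.right_notMem h))
    continuousOn_const (fun _ _ ↦ one_ne_zero) tendsto_const_nhds (f := f) ?_)
  simpa using hf.mono (frontier_connectedComponentIn_compl_subset hK a)

lemma SameFace.exists_isVanishingLog (hK : IsClosed K) (h : SameFace K a b) :
    ∃ f, IsVanishingLog f (pointRatio a b) K := by
  refine isPreconnected_connectedComponentIn.induction₂
    (fun x y ↦ ∃ f, IsVanishingLog f (pointRatio x y) K) (fun x hx ↦ ?_)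
    (fun x y z _ _ _ ⟨f, hf⟩ ⟨g, hg⟩ ↦ ⟨_, hf.trans hg⟩) (fun x y _ _ ⟨f, hf⟩ ↦ ⟨_, hf.symm⟩)
    (mem_connectedComponentIn h.left_notMem) h
  obtain ⟨r, hr, hrK⟩ := Metric.mem_nhds_iff.1
    (hK.isOpen_compl.mem_nhds (connectedComponentIn_subset _ _ hx))
  filter_upwards [mem_nhdsWithin_of_mem_nhds (Metric.ball_mem_nhds x hr)] with y hy
  have hfar : ∀ z ∈ K, ‖y - x‖ < ‖z - x‖ := fun z hz ↦ by
    rw [← dist_eq_norm, ← dist_eq_norm]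
    exact (Metric.mem_ball.1 hy).trans_le (not_lt.1 fun h ↦ hrK h hz)
  exact ⟨_, (isVanishingLog_log_pointRatio hfar).symm⟩

end Borsuk

/-! ### Open arcs -/

section OpenArcs

variable {X : Type*} [TopologicalSpace X] {σ ρ U : Set X} {p : X}

/-- `σ` is a simple open arc: a closed set homeomorphic to `ℝ`, presented here as the range of a
closed embedding of the real line. -/
def IsOpenArc (σ : Set X) : Prop :=
  ∃ φ : ℝ → X, IsClosedEmbedding φ ∧ range φ = σ

/-- `ρ` is a ray with end point `p`: one of the two closed halves into which `p` divides a simple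
open arc. -/
def IsRay (ρ : Set X) (p : X) : Prop :=
  ∃ φ : ℝ → X, ∃ t, IsClosedEmbedding φ ∧ φ t = p ∧ φ '' Ici t = ρ

lemma isRay_image_Ici {φ : ℝ → X} (hφ : IsClosedEmbedding φ) (t : ℝ) :
    IsRay (φ '' Ici t) (φ t) :=
  ⟨φ, t, hφ, rfl, rfl⟩

lemma isRay_image_Iic {φ : ℝ → X} (hφ : IsClosedEmbedding φ) (t : ℝ) :
    IsRay (φ '' Iic t) (φ t) :=
  ⟨φ ∘ Neg.neg, -t, hφ.comp (Homeomorph.neg ℝ).isClosedEmbedding, by simp,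
    by rw [image_comp, image_neg_Ici, neg_neg]⟩

lemma IsOpenArc.isClosed (hσ : IsOpenArc σ) : IsClosed σ := by
  obtain ⟨φ, hφ, rfl⟩ := hσ
  exact hφ.isClosed_range

lemma isOpenArc_of_homeomorph (hσ : IsClosed σ) (e : σ ≃ₜ ℝ) : IsOpenArc σ :=
  ⟨_, hσ.isClosedEmbedding_subtypeVal.comp e.symm.isClosedEmbedding, by
    rw [range_comp, e.symm.surjective.range_eq, image_univ, Subtype.range_coe]⟩

lemma IsOpenArc.image {Y : Type*} [TopologicalSpace Y] (hσ : IsOpenArc σ) (e : X ≃ₜ Y) :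
    IsOpenArc (e '' σ) := by
  obtain ⟨φ, hφ, rfl⟩ := hσ
  exact ⟨e ∘ φ, e.isClosedEmbedding.comp hφ, range_comp e φ⟩

lemma IsOpenArc.exists_rays (hσ : IsOpenArc σ) (hp : p ∈ σ) :
    ∃ ρ₁ ρ₂, IsRay ρ₁ p ∧ IsRay ρ₂ p ∧ ρ₁ ∪ ρ₂ = σ ∧ ρ₁ ∩ ρ₂ = {p} := by
  obtain ⟨φ, hφ, rfl⟩ := hσ
  obtain ⟨t, rfl⟩ := hp
  refine ⟨_, _, isRay_image_Iic hφ t, isRay_image_Ici hφ t, ?_, ?_⟩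
  · rw [← image_union, Iic_union_Ici, image_univ]
  · rw [← image_inter hφ.injective, Iic_inter_Ici, Icc_self, image_singleton]

lemma IsOpenArc.exists_rays_of_mem_nhds (hσ : IsOpenArc σ) (hp : p ∈ σ) (hU : U ∈ 𝓝 p) :
    ∃ ρ₁ ρ₂ q₁ q₂, IsRay ρ₁ q₁ ∧ IsRay ρ₂ q₂ ∧ Disjoint ρ₁ ρ₂ ∧ p ∉ ρ₁ ∪ ρ₂ ∧
      ρ₁ ∪ ρ₂ ⊆ σ ∧ σ \ U ⊆ ρ₁ ∪ ρ₂ := by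
  obtain ⟨φ, hφ, rfl⟩ := hσ
  obtain ⟨t, rfl⟩ := hp
  obtain ⟨ε, hε, hεU⟩ :=
    Metric.mem_nhds_iff.1 (hφ.continuous.continuousAt.preimage_mem_nhds hU)
  rw [Real.ball_eq_Ioo] at hεU
  refine ⟨_, _, _, _, isRay_image_Iic hφ (t - ε), isRay_image_Ici hφ (t + ε), ?_, ?_, ?_, ?_⟩
  · rw [disjoint_image_iff hφ.injective, disjoint_left]
    exact fun s hs hs' ↦ by linarith [mem_Iic.1 hs, mem_Ici.1 hs']
  · rw [← image_union, hφ.injective.mem_set_image]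
    simp [hε]
  · exact union_subset (image_subset_range _ _) (image_subset_range _ _)
  · rintro - ⟨⟨s, rfl⟩, hs⟩
    rw [← image_union, hφ.injective.mem_set_image]
    by_contra! h
    simp only [mem_union, mem_Iic, mem_Ici, not_or, not_le] at h
    exact hs (hεU h)

namespace IsRay

lemma isClosed (hρ : IsRay ρ p) : IsClosed ρ := by
  obtain ⟨φ, t, hφ, -, rfl⟩ := hρ
  exact hφ.isClosedMap _ isClosed_Ici

lemma isPreconnected (hρ : IsRay ρ p) : IsPreconnected ρ := by
  obtain ⟨φ, t, hφ, -, rfl⟩ := hρ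
  exact isPreconnected_Ici.image φ hφ.continuous.continuousOn

lemma isPreconnected_diff_endpoint (hρ : IsRay ρ p) : IsPreconnected (ρ \ {p}) := by
  obtain ⟨φ, t, hφ, rfl, rfl⟩ := hρ
  rw [← image_singleton, ← image_sdiff hφ.injective, Ici_sdiff_left]
  exact isPreconnected_Ioi.image φ hφ.continuous.continuousOn

lemma endpoint_mem (hρ : IsRay ρ p) : p ∈ ρ := by
  obtain ⟨φ, t, -, rfl, rfl⟩ := hρ
  exact mem_image_of_mem φ self_mem_Ici

end IsRay

end OpenArcs

lemma cocompact_inf_principal_Ici (t : ℝ) : cocompact ℝ ⊓ 𝓟 (Ici t) = atTop := by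
  rw [cocompact_eq_atBot_atTop, inf_sup_right, inf_eq_left.2 (le_principal_iff.2 (Ici_mem_atTop t)),
    (disjoint_principal_right.2 _).eq_bot, bot_sup_eq]
  simpa using Iio_mem_atBot t

lemma exists_isVanishingLog_Ici {u : ℝ → ℂ} {t : ℝ} (hu : ContinuousOn u (Ici t))
    (hu₀ : ∀ s ∈ Ici t, u s ≠ 0) (hu₁ : Tendsto u atTop (𝓝 1)) :
    ∃ f, IsVanishingLog f u (Ici t) := by
  obtain ⟨f, hf, hfu⟩ := exists_continuous_log (u := fun s ↦ u (max t s))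
    (hu.comp_continuous (by fun_prop) fun s ↦ le_max_left t s) fun s ↦ hu₀ _ (le_max_left t s)
  replace hfu : ∀ s ∈ Ici t, Complex.exp (f s) = u s := fun s hs ↦ by
    rw [hfu, max_eq_right hs]
  obtain ⟨s, hs⟩ : ∃ s, ∀ x ≥ s, t ≤ x ∧ u x ∈ Complex.slitPlane :=
    eventually_atTop.1 ((eventually_ge_atTop t).and
      (hu₁ (Complex.isOpen_slitPlane.mem_nhds Complex.one_mem_slitPlane)))
  let c := f s - Complex.log (u s)
  have hc : Complex.exp c = 1 := by
    have h₀ := Complex.slitPlane_ne_zero (hs s le_rfl).2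
    rw [Complex.exp_sub, hfu s (hs s le_rfl).1, Complex.exp_log h₀, div_self h₀]
  have heq : EqOn f (fun x ↦ Complex.log (u x) + c) (Ici s) := by
    refine eqOn_of_exp_eqOn isPreconnected_Ici hf.continuousOn ?_ (fun x hx ↦ ?_) self_mem_Ici
      (by simp [c])
    · exact ((hu.mono fun x hx ↦ (hs x hx).1).clog fun x hx ↦ (hs x hx).2).add continuousOn_const
    · rw [Complex.exp_add, hc, mul_one, hfu x (hs x hx).1,
        Complex.exp_log (Complex.slitPlane_ne_zero (hs x hx).2)]
  refine ⟨fun x ↦ f x - c, by fun_prop, fun x hx ↦ ?_, ?_⟩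
  · rw [Complex.exp_sub, hc, div_one, hfu x hx]
  · rw [cocompact_inf_principal_Ici]
    have hlog : Tendsto (fun x ↦ Complex.log (u x)) atTop (𝓝 0) := by
      simpa using hu₁.clog Complex.one_mem_slitPlane
    refine hlog.congr' ?_
    filter_upwards [Ici_mem_atTop s] with x hx
    rw [heq hx, add_sub_cancel_right]

lemma IsRay.neBot_cocompact_inf_principal {X : Type*} [TopologicalSpace X] {ρ : Set X} {p : X}
    (hρ : IsRay ρ p) : (cocompact X ⊓ 𝓟 ρ).NeBot := by
  obtain ⟨φ, t, hφ, -, rfl⟩ := hρ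
  rw [← map_cocompact_inf_principal hφ, cocompact_inf_principal_Ici]
  infer_instance

lemma IsRay.eqOn {X : Type*} [TopologicalSpace X] {ρ : Set X} {p : X} (hρ : IsRay ρ p)
    {f g u : X → ℂ} (hf : IsVanishingLog f u ρ) (hg : IsVanishingLog g u ρ) : EqOn f g ρ :=
  have := hρ.neBot_cocompact_inf_principal
  hf.eqOn hg hρ.isPreconnected

section PlaneArcs

variable {σ τ ρ ρ₁ ρ₂ : Set ℂ} {a b c p q₁ q₂ : ℂ} {f g : ℂ → ℂ}

lemma IsRay.exists_isVanishingLog (hρ : IsRay ρ p) (ha : a ∉ ρ) (hb : b ∉ ρ) :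
    ∃ f, IsVanishingLog f (pointRatio a b) ρ := by
  obtain ⟨φ, t, hφ, -, rfl⟩ := hρ
  have hne : ∀ {c}, c ∉ φ '' Ici t → ∀ s ∈ Ici t, φ s ≠ c := fun hc s hs h ↦ hc ⟨s, hs, h⟩
  obtain ⟨f, hf⟩ := exists_isVanishingLog_Ici (u := pointRatio a b ∘ φ) (t := t)
    (fun s hs ↦ ((continuousAt_pointRatio (hne hb s hs)).comp
      hφ.continuous.continuousAt).continuousWithinAt)
    (fun s hs ↦ pointRatio_ne_zero (hne ha s hs) (hne hb s hs))
    ((tendsto_pointRatio_cocompact a b).comp (hφ.tendsto_cocompact.mono_left atTop_le_cocompact))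
  exact ⟨_, hf.extend hφ⟩

lemma sameFace_union_of_disjoint_rays (h₁ : IsRay ρ₁ q₁) (h₂ : IsRay ρ₂ q₂)
    (h : Disjoint ρ₁ ρ₂) (ha : a ∉ ρ₁ ∪ ρ₂) (hb : b ∉ ρ₁ ∪ ρ₂) : SameFace (ρ₁ ∪ ρ₂) a b := by
  rw [mem_union, not_or] at ha hb
  obtain ⟨f, hf⟩ := h₁.exists_isVanishingLog ha.1 hb.1
  obtain ⟨g, hg⟩ := h₂.exists_isVanishingLog ha.2 hb.2
  obtain ⟨F, hF, -⟩ := IsVanishingLog.exists_union h₁.isClosed h₂.isClosed hf hg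
    (by rw [h.inter_eq]; exact eqOn_empty f g)
  exact sameFace_of_isVanishingLog (h₁.isClosed.union h₂.isClosed) hF

lemma IsVanishingLog.exponent_eq_zero_of_not_sameFace {K : Set ℂ} (hK : IsClosed K) {m n : ℤ}
    (hf : IsVanishingLog f (pointRatio a b ^ m * pointRatio c b ^ n) K) (ha : a ∉ K) (hb : b ∉ K)
    (hc : c ∉ K) (hab : ¬SameFace K a b) (hac : ¬SameFace K a c) : m = 0 := by
  have hbW : b ∉ closure (connectedComponentIn Kᶜ a) := fun h ↦ hab (.of_mem_closure hK hb h)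
  have hcW : c ∉ closure (connectedComponentIn Kᶜ a) := fun h ↦ hac (.of_mem_closure hK hc h)
  have hne : ∀ z ∈ closure (connectedComponentIn Kᶜ a), pointRatio c b z ≠ 0 :=
    fun z hz ↦ pointRatio_ne_zero (ne_of_mem_of_not_mem hz hcW) (ne_of_mem_of_not_mem hz hbW)
  refine zpow_exponent_eq_zero hK.isOpen_compl.connectedComponentIn
    (mem_connectedComponentIn ha) hbW (fun z hz ↦ ?_) (fun z hz ↦ zpow_ne_zero _ (hne z hz)) ?_
    (hf.mono (frontier_connectedComponentIn_compl_subset hK a))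
  · exact ((continuousAt_pointRatio (ne_of_mem_of_not_mem hz hbW)).zpow₀ _
      (.inl (hne z hz))).continuousWithinAt
  · simpa using (tendsto_pointRatio_cocompact c b).zpow₀ n (.inl one_ne_zero)

/-- The logarithms of `z ↦ (z - a) / (z - b)` and `z ↦ (z - c) / (z - b)` on the two rays from `p`
jump at `p` by multiples of `2πi`. The combination whose jumps cancel is a logarithm on all of `σ`,
so one of the jumps vanishes by `IsVanishingLog.exponent_eq_zero_of_not_sameFace`. -/
lemma SameFace.of_not_sameFace (hσ : IsOpenArc σ) (hp : p ∈ σ) (ha : a ∉ σ) (hb : b ∉ σ)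
    (hc : c ∉ σ) (hab : ¬SameFace σ a b) (hac : ¬SameFace σ a c) : SameFace σ c b := by
  obtain ⟨ρ₁, ρ₂, h₁, h₂, rfl, hρ⟩ := hσ.exists_rays hp
  rw [mem_union, not_or] at ha hb hc
  obtain ⟨f₁, hf₁⟩ := h₁.exists_isVanishingLog ha.1 hb.1
  obtain ⟨f₂, hf₂⟩ := h₂.exists_isVanishingLog ha.2 hb.2
  obtain ⟨g₁, hg₁⟩ := h₁.exists_isVanishingLog hc.1 hb.1
  obtain ⟨g₂, hg₂⟩ := h₂.exists_isVanishingLog hc.2 hb.2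
  obtain ⟨n, hn⟩ := Complex.exp_eq_exp_iff_exists_int.1
    ((hf₁.exp_eq p h₁.endpoint_mem).trans (hf₂.exp_eq p h₂.endpoint_mem).symm)
  obtain ⟨m, hm⟩ := Complex.exp_eq_exp_iff_exists_int.1
    ((hg₁.exp_eq p h₁.endpoint_mem).trans (hg₂.exp_eq p h₂.endpoint_mem).symm)
  obtain ⟨F, hF, -⟩ := IsVanishingLog.exists_union h₁.isClosed h₂.isClosed
    ((hf₁.zpow m).mul (hg₁.zpow (-n))) ((hf₂.zpow m).mul (hg₂.zpow (-n))) <| by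
      rw [hρ, eqOn_singleton]
      simp only [Pi.add_apply, Pi.smul_apply, hn, hm]
      push_cast [zsmul_eq_mul]
      ring
  have hσc := h₁.isClosed.union h₂.isClosed
  have hm₀ : m = 0 := hF.exponent_eq_zero_of_not_sameFace hσc (by simpa using ha)
    (by simpa using hb) (by simpa using hc) hab hac
  rw [hm₀, Int.cast_zero, zero_mul, add_zero] at hm
  obtain ⟨G, hG, -⟩ := IsVanishingLog.exists_union h₁.isClosed h₂.isClosed hg₁ hg₂
    (by rwa [hρ, eqOn_singleton])
  exact sameFace_of_isVanishingLog hσc hG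

lemma mem_closure_connectedComponentIn_compl (hσ : IsOpenArc σ) (hsep : ¬IsPreconnected σᶜ)
    (hp : p ∈ σ) (ha : a ∉ σ) : p ∈ closure (connectedComponentIn σᶜ a) := by
  by_contra hcl
  obtain ⟨ρ₁, ρ₂, _, _, h₁, h₂, hdisj, -, hρσ, hσρ⟩ :=
    hσ.exists_rays_of_mem_nhds hp (isClosed_closure.isOpen_compl.mem_nhds hcl)
  obtain ⟨b, hb, hab⟩ := exists_not_sameFace hsep a
  have hab' := sameFace_union_of_disjoint_rays h₁ h₂ hdisj (fun h ↦ ha (hρσ h))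
    fun h ↦ hb (hρσ h)
  have hsub : connectedComponentIn (ρ₁ ∪ ρ₂)ᶜ a ⊆ connectedComponentIn σᶜ a := by
    refine isPreconnected_connectedComponentIn.subset_left_of_subset_union
      hσ.isClosed.isOpen_compl.connectedComponentIn isClosed_closure.isOpen_compl
      (disjoint_compl_right_iff_subset.2 subset_closure) (fun z hz ↦ ?_)
      ⟨a, mem_connectedComponentIn hab'.left_notMem, mem_connectedComponentIn ha⟩
    by_contra! hzW
    rw [mem_union, mem_compl_iff, not_or, not_not] at hzW
    have hzσ : z ∈ σ := by
      by_contra h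
      exact hzW.1 (SameFace.of_mem_closure hσ.isClosed h hzW.2)
    exact connectedComponentIn_subset _ _ hz (hσρ ⟨hzσ, not_not.2 hzW.2⟩)
  exact hab (hsub hab')

lemma SameFace.exists_ball_forall_union_compl_ball (hσ : IsOpenArc σ) (hp : p ∈ σ) {r : ℝ}
    (hr : 0 < r) : ∃ δ > 0, δ ≤ r ∧ ∀ x ∈ Metric.ball p δ, ∀ y ∈ Metric.ball p δ,
      SameFace σ x y → SameFace (σ ∪ (Metric.ball p r)ᶜ) x y := by
  obtain ⟨ρ₁, ρ₂, _, _, h₁, h₂, -, hpρ, hρσ, hσρ⟩ :=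
    hσ.exists_rays_of_mem_nhds hp (Metric.ball_mem_nhds p hr)
  have hL : IsClosed (ρ₁ ∪ ρ₂) := h₁.isClosed.union h₂.isClosed
  obtain ⟨η, hη, hηL⟩ := Metric.mem_nhds_iff.1
    (inter_mem (hL.isOpen_compl.mem_nhds hpρ) (Metric.ball_mem_nhds p hr))
  have hηr : Metric.ball p η ⊆ Metric.ball p r := hηL.trans inter_subset_right
  refine ⟨min (η / 3) r, by positivity, min_le_right _ _, fun x hx y hy hxy ↦ ?_⟩
  obtain ⟨f, hf⟩ := hxy.exists_isVanishingLog hσ.isClosed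
  have hfar : ∀ z ∉ Metric.ball p η, ‖x - y‖ < ‖z - y‖ := fun z hz ↦ by
    simp only [Metric.mem_ball, lt_min_iff, not_lt] at hx hy hz
    rw [← dist_eq_norm, ← dist_eq_norm]
    linarith [dist_triangle_right x y p, dist_triangle z y p]
  have hlogρ := isVanishingLog_log_pointRatio fun z (hz : z ∈ ρ₁ ∪ ρ₂) ↦
    hfar z fun h ↦ (hηL h).1 hz
  have hlog := isVanishingLog_log_pointRatio fun z (hz : z ∈ (Metric.ball p r)ᶜ) ↦
    hfar z fun h ↦ hz (hηr h)
  have heq : EqOn f (fun z ↦ Complex.log (pointRatio x y z)) (ρ₁ ∪ ρ₂) :=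
    (h₁.eqOn (hf.mono (subset_union_left.trans hρσ)) (hlogρ.mono subset_union_left)).union
      (h₂.eqOn (hf.mono (subset_union_right.trans hρσ)) (hlogρ.mono subset_union_right))
  have hball : IsClosed (Metric.ball p r)ᶜ := Metric.isOpen_ball.isClosed_compl
  obtain ⟨F, hF, -⟩ := IsVanishingLog.exists_union hσ.isClosed hball hf hlog (heq.mono hσρ)
  exact sameFace_of_isVanishingLog (hσ.isClosed.union hball) hF

lemma exists_ray_diff_endpoint_disjoint_face (hσ : IsOpenArc σ) (hsep : ¬IsPreconnected σᶜ)
    (h₁ : IsRay ρ₁ p) (h₂ : IsRay ρ₂ p) (hστ : σ ∩ (ρ₁ ∪ ρ₂) ⊆ {p})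
    (hcross : CrossesAt σ (ρ₁ ∪ ρ₂) p) (a : ℂ) :
    Disjoint (ρ₁ \ {p}) (connectedComponentIn σᶜ a) ∨
      Disjoint (ρ₂ \ {p}) (connectedComponentIn σᶜ a) := by
  have key : ∀ C, IsPreconnected C → Disjoint C σ →
      ¬Disjoint C (connectedComponentIn σᶜ a) → ∀ z ∈ C, SameFace σ a z := by
    intro C hC hCσ h z hz
    obtain ⟨x, hx, hax⟩ := not_disjoint_iff.1 h
    exact SameFace.trans hax (.of_isPreconnected hC hCσ hx hz)
  have hoff : ∀ ρ ⊆ ρ₁ ∪ ρ₂, Disjoint (ρ \ {p}) σ := fun ρ hρ ↦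
    disjoint_left.2 fun z hz hzσ ↦ hz.2 (hστ ⟨hzσ, hρ hz.1⟩)
  by_contra! hmeet
  have hτ : ∀ z ∈ ρ₁ ∪ ρ₂, z ∉ σ → SameFace σ a z := by
    rintro z hz hzσ
    have hzp : z ≠ p := fun h ↦ hzσ (h ▸ hcross.1)
    rcases hz with hz | hz
    · exact key _ h₁.isPreconnected_diff_endpoint (hoff _ subset_union_left) hmeet.1 z ⟨hz, hzp⟩
    · exact key _ h₂.isPreconnected_diff_endpoint (hoff _ subset_union_right) hmeet.2 z ⟨hz, hzp⟩
  obtain ⟨V, hV, -, C₁, C₂, hVC, -, hC₁, hC₂, hm₁, hm₂⟩ := hcross.2.2 univ univ_mem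
  have hside : ∀ C, IsPreconnected C → C ⊆ V \ σ → ((ρ₁ ∪ ρ₂) ∩ C).Nonempty →
      ∀ z ∈ C, SameFace σ a z := fun C hC hCV ⟨x, hxτ, hxC⟩ ↦
    key C hC (disjoint_left.2 fun z hz ↦ (hCV hz).2)
      (not_disjoint_iff.2 ⟨x, hxC, hτ x hxτ (hCV hxC).2⟩)
  obtain ⟨b, hb, hab⟩ := exists_not_sameFace hsep a
  obtain ⟨y, hyV, hby⟩ := mem_closure_iff_nhds.1
    (mem_closure_connectedComponentIn_compl hσ hsep hcross.1 hb) V hV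
  have hy : y ∈ C₁ ∪ C₂ := hVC ▸ ⟨hyV, SameFace.right_notMem hby⟩
  have hay : SameFace σ a y := hy.elim (hside C₁ hC₁ (hVC ▸ subset_union_left) hm₁ y)
    (hside C₂ hC₂ (hVC ▸ subset_union_right) hm₂ y)
  exact hab (hay.trans (SameFace.symm hby))

/-- A logarithm off the face of `a` exists because `a` and `b` share this face. It agrees with `f`
on `σ`, and with `g` on whichever ray of `τ` from `p` avoids the face. -/
lemma IsVanishingLog.eq_of_crossesAt (hσ : IsOpenArc σ) (hτ : IsOpenArc τ)
    (hsep : ¬IsPreconnected σᶜ) (hστ : (σ ∩ τ).Subsingleton) (hcross : CrossesAt σ τ p)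
    (hab : SameFace σ a b) (hf : IsVanishingLog f (pointRatio a b) σ)
    (hg : IsVanishingLog g (pointRatio a b) τ) : f p = g p := by
  let W := connectedComponentIn σᶜ a
  have hW : IsOpen W := hσ.isClosed.isOpen_compl.connectedComponentIn
  have habW : SameFace Wᶜ a b := .of_isPreconnected isPreconnected_connectedComponentIn
    disjoint_compl_right (mem_connectedComponentIn hab.left_notMem) hab
  obtain ⟨F, hF⟩ := habW.exists_isVanishingLog hW.isClosed_compl
  have hσW : σ ⊆ Wᶜ := fun z hz hzW ↦ connectedComponentIn_subset _ _ hzW hz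
  obtain ⟨σ₁, σ₂, hσ₁, -, rfl, -⟩ := hσ.exists_rays hcross.1
  obtain ⟨τ₁, τ₂, hτ₁, hτ₂, rfl, -⟩ := hτ.exists_rays hcross.2.1
  have hfF : f p = F p := hσ₁.eqOn (hf.mono subset_union_left)
    (hF.mono (subset_union_left.trans hσW)) hσ₁.endpoint_mem
  have hgF : ∀ ρ ⊆ τ₁ ∪ τ₂, IsRay ρ p → Disjoint (ρ \ {p}) W → g p = F p := by
    intro ρ hρτ hρ hρW
    refine hρ.eqOn (hg.mono hρτ) (hF.mono fun z hz ↦ ?_) hρ.endpoint_mem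
    rcases eq_or_ne z p with rfl | hzp
    · exact hσW hcross.1
    · exact disjoint_left.1 hρW ⟨hz, hzp⟩
  have hmeet : (σ₁ ∪ σ₂) ∩ (τ₁ ∪ τ₂) ⊆ {p} := fun z hz ↦ hστ hz ⟨hcross.1, hcross.2.1⟩
  rcases exists_ray_diff_endpoint_disjoint_face hσ hsep hτ₁ hτ₂ hmeet hcross a with h | h
  · rw [hfF, hgF τ₁ subset_union_left hτ₁ h]
  · rw [hfF, hgF τ₂ subset_union_right hτ₂ h]

end PlaneArcs

/-- The points lying on at least two arcs of `A`. -/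
def multiplePoints {X : Type*} (A : Set (Set X)) : Set X :=
  {p | ∃ σ ∈ A, ∃ τ ∈ A, σ ≠ τ ∧ p ∈ σ ∩ τ}

lemma multiplePoints_subset_sUnion {X : Type*} (A : Set (Set X)) :
    multiplePoints A ⊆ ⋃₀ A :=
  fun _ ⟨σ, hσ, _, _, _, hp, _⟩ ↦ ⟨σ, hσ, hp⟩

section Arrangements

variable {X : Type*} [TopologicalSpace X] {A B : Set (Set X)} {σ τ : Set X}

/-- `A` is an arrangement of arcs in the space `X`. This is `IsArcArrangement` for an arbitrary
space, with `A` a finite set rather than a `Finset`. -/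
structure IsArrangementOfArcs (A : Set (Set X)) : Prop where
  finite : A.Finite
  isOpenArc : ∀ σ ∈ A, IsOpenArc σ
  not_isPreconnected_compl : ∀ σ ∈ A, ¬IsPreconnected σᶜ
  subsingleton_inter : ∀ σ ∈ A, ∀ τ ∈ A, σ ≠ τ → (σ ∩ τ).Subsingleton
  crossesAt : ∀ σ ∈ A, ∀ τ ∈ A, σ ≠ τ → ∀ p ∈ σ ∩ τ, CrossesAt σ τ p

namespace IsArrangementOfArcs

lemma mono (hA : IsArrangementOfArcs A) (h : B ⊆ A) : IsArrangementOfArcs B where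
  finite := hA.finite.subset h
  isOpenArc σ hσ := hA.isOpenArc σ (h hσ)
  not_isPreconnected_compl σ hσ := hA.not_isPreconnected_compl σ (h hσ)
  subsingleton_inter σ hσ τ hτ := hA.subsingleton_inter σ (h hσ) τ (h hτ)
  crossesAt σ hσ τ hτ := hA.crossesAt σ (h hσ) τ (h hτ)

lemma isClosed_sUnion (hA : IsArrangementOfArcs A) : IsClosed (⋃₀ A) :=
  sUnion_eq_biUnion ▸ hA.finite.isClosed_biUnion fun σ hσ ↦ (hA.isOpenArc σ hσ).isClosed

lemma finite_multiplePoints (hA : IsArrangementOfArcs A) : (multiplePoints A).Finite := by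
  have hsub : multiplePoints A ⊆ ⋃ q ∈ A.offDiag, q.1 ∩ q.2 := by
    rintro p ⟨σ, hσ, τ, hτ, hne, hp⟩
    exact mem_iUnion₂.2 ⟨(σ, τ), ⟨hσ, hτ, hne⟩, hp⟩
  exact (hA.finite.offDiag.biUnion fun q hq ↦
    (hA.subsingleton_inter _ hq.1 _ hq.2.1 hq.2.2).finite).subset hsub

end IsArrangementOfArcs

end Arrangements

lemma IsArrangementOfArcs.sameFace_sUnion_union {A : Set (Set ℂ)} (hA : IsArrangementOfArcs A)
    {P : Set ℂ} (hP : P.Finite) {a b : ℂ} (ha : a ∉ P) (hb : b ∉ P)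
    (hab : ∀ σ ∈ A, SameFace σ a b) : SameFace (⋃₀ A ∪ P) a b := by
  have : Finite A := hA.finite
  have hclosed : ∀ σ : A, IsClosed (σ : Set ℂ) := fun σ ↦ (hA.isOpenArc σ σ.2).isClosed
  choose f hf using fun σ : A ↦ (hab σ σ.2).exists_isVanishingLog (hclosed σ)
  have hagree : ∀ σ τ : A, EqOn (f σ) (f τ) (σ ∩ τ) := fun σ τ p hp ↦ by
    rcases eq_or_ne σ τ with rfl | hne
    · rfl
    · have hne' := Subtype.coe_ne_coe.2 hne
      exact IsVanishingLog.eq_of_crossesAt (hA.isOpenArc σ σ.2) (hA.isOpenArc τ τ.2)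
        (hA.not_isPreconnected_compl σ σ.2) (hA.subsingleton_inter σ σ.2 τ τ.2 hne')
        (hA.crossesAt σ σ.2 τ τ.2 hne' p hp) (hab σ σ.2) (hf σ) (hf τ)
  obtain ⟨F, hF, -⟩ := IsVanishingLog.exists_iUnion hclosed hf hagree
  rw [← sUnion_eq_iUnion] at hF
  have hP' : (P \ ⋃₀ A).Finite := hP.subset sdiff_subset
  have hlog := IsVanishingLog.log_of_finite (u := pointRatio a b) hP' fun z hz ↦
    pointRatio_ne_zero (ne_of_mem_of_not_mem hz.1 ha) (ne_of_mem_of_not_mem hz.1 hb)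
  obtain ⟨G, hG, -⟩ := IsVanishingLog.exists_union hA.isClosed_sUnion hP'.isClosed hF hlog
    (by rw [disjoint_sdiff_right.inter_eq]; exact eqOn_empty _ _)
  rw [union_sdiff_self] at hG
  exact sameFace_of_isVanishingLog (hA.isClosed_sUnion.union hP.isClosed) hG

/-! ### Simple arcs -/

section SimpleArcs

variable {X Y : Type*} [TopologicalSpace X] [TopologicalSpace Y] {S T : Set X} {a b c p : X}

/-- `S` is a simple arc from `a` to `b`. The parameter interval is arbitrary, and the constant arc
from a point to itself is allowed. -/
def IsSimpleArc (S : Set X) (a b : X) : Prop :=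
  ∃ (u v : ℝ) (f : ℝ → X), u ≤ v ∧ ContinuousOn f (Icc u v) ∧ InjOn f (Icc u v) ∧
    f u = a ∧ f v = b ∧ f '' Icc u v = S

lemma isSimpleArc_image_Icc {f : ℝ → X} {u v : ℝ} (huv : u ≤ v) (hc : ContinuousOn f (Icc u v))
    (hi : InjOn f (Icc u v)) : IsSimpleArc (f '' Icc u v) (f u) (f v) :=
  ⟨u, v, f, huv, hc, hi, rfl, rfl, rfl⟩

namespace IsSimpleArc

lemma singleton (a : X) : IsSimpleArc {a} a a :=
  ⟨0, 0, fun _ ↦ a, le_rfl, continuousOn_const, by simp, rfl, rfl, by simp⟩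

lemma eq_singleton (h : IsSimpleArc S a a) : S = {a} := by
  obtain ⟨u, v, f, huv, -, hi, rfl, hv, rfl⟩ := h
  obtain rfl := hi (right_mem_Icc.2 huv) (left_mem_Icc.2 huv) hv
  rw [Icc_self, image_singleton]

lemma left_mem (h : IsSimpleArc S a b) : a ∈ S := by
  obtain ⟨u, v, f, huv, -, -, rfl, -, rfl⟩ := h
  exact mem_image_of_mem f (left_mem_Icc.2 huv)

lemma right_mem (h : IsSimpleArc S a b) : b ∈ S := by
  obtain ⟨u, v, f, huv, -, -, -, rfl, rfl⟩ := h
  exact mem_image_of_mem f (right_mem_Icc.2 huv)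

lemma isCompact (h : IsSimpleArc S a b) : IsCompact S := by
  obtain ⟨u, v, f, -, hc, -, -, -, rfl⟩ := h
  exact isCompact_Icc.image_of_continuousOn hc

lemma isPreconnected (h : IsSimpleArc S a b) : IsPreconnected S := by
  obtain ⟨u, v, f, -, hc, -, -, -, rfl⟩ := h
  exact isPreconnected_Icc.image f hc

lemma image (h : IsSimpleArc S a b) (e : X ≃ₜ Y) : IsSimpleArc (e '' S) (e a) (e b) := by
  obtain ⟨u, v, f, huv, hc, hi, rfl, rfl, rfl⟩ := h
  exact ⟨u, v, e ∘ f, huv, e.continuous.comp_continuousOn hc, e.injective.comp_injOn hi, rfl, rfl,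
    image_comp e f _⟩

lemma symm (h : IsSimpleArc S a b) : IsSimpleArc S b a := by
  obtain ⟨u, v, f, huv, hc, hi, rfl, rfl, rfl⟩ := h
  have hneg : Neg.neg '' Icc (-v) (-u) = Icc u v := by simp
  refine ⟨-v, -u, f ∘ Neg.neg, neg_le_neg huv, ?_, ?_, by simp, by simp, ?_⟩
  · exact hc.comp continuousOn_neg (mapsTo_iff_image_subset.2 hneg.subset)
  · exact hi.comp neg_injective.injOn (mapsTo_iff_image_subset.2 hneg.subset)
  · rw [image_comp, hneg]

lemma exists_param (h : IsSimpleArc S a b) (hab : a ≠ b) {s t : ℝ} (hst : s < t) :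
    ∃ f : ℝ → X, ContinuousOn f (Icc s t) ∧ InjOn f (Icc s t) ∧ f s = a ∧ f t = b ∧
      f '' Icc s t = S := by
  obtain ⟨u, v, f, huv, hc, hi, rfl, rfl, rfl⟩ := h
  have huv' : u < v := huv.lt_of_ne fun h ↦ hab (h ▸ rfl)
  obtain ⟨k, d, hk, hs, ht⟩ : ∃ k d : ℝ, 0 < k ∧ k * s + d = u ∧ k * t + d = v := by
    have hts := sub_pos.2 hst
    refine ⟨(v - u) / (t - s), u - (v - u) / (t - s) * s, div_pos (sub_pos.2 huv') hts, ?_, ?_⟩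
    · ring
    · field_simp
      ring
  have himage : (fun x ↦ k * x + d) '' Icc s t = Icc u v := by
    rw [image_affine_Icc' hk, hs, ht]
  have hinj : Function.Injective fun x : ℝ ↦ k * x + d := fun x y hxy ↦
    mul_left_cancel₀ hk.ne' (add_right_cancel hxy)
  refine ⟨fun x ↦ f (k * x + d), ?_, ?_, congrArg f hs, congrArg f ht, ?_⟩
  · exact hc.comp (by fun_prop) (mapsTo_iff_image_subset.2 himage.subset)
  · exact hi.comp hinj.injOn (mapsTo_iff_image_subset.2 himage.subset)
  · rw [← himage, image_image]

lemma exists_union_eq (h : IsSimpleArc S a b) (hc : c ∈ S) :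
    ∃ S₁ S₂, IsSimpleArc S₁ a c ∧ IsSimpleArc S₂ c b ∧ S₁ ∪ S₂ = S ∧ S₁ ∩ S₂ ⊆ {c} := by
  obtain ⟨u, v, f, -, hf, hi, rfl, rfl, rfl⟩ := h
  obtain ⟨t, ht, rfl⟩ := hc
  have h₁ : Icc u t ⊆ Icc u v := Icc_subset_Icc_right ht.2
  have h₂ : Icc t v ⊆ Icc u v := Icc_subset_Icc_left ht.1
  refine ⟨f '' Icc u t, f '' Icc t v, isSimpleArc_image_Icc ht.1 (hf.mono h₁) (hi.mono h₁),
    isSimpleArc_image_Icc ht.2 (hf.mono h₂) (hi.mono h₂), ?_, ?_⟩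
  · rw [← image_union, Icc_union_Icc_eq_Icc ht.1 ht.2]
  · rw [← hi.image_inter h₁ h₂, Icc_inter_Icc_eq_singleton ht.1 ht.2, image_singleton]

lemma exists_subset_inter_subset (h : IsSimpleArc S a b) (hT : IsClosed T)
    (hST : (S ∩ T).Nonempty) :
    ∃ R c, IsSimpleArc R a c ∧ R ⊆ S ∧ c ∈ T ∧ R ∩ T ⊆ {c} := by
  obtain ⟨u, v, f, -, hc, hi, rfl, rfl, rfl⟩ := h
  have hK : IsCompact (Icc u v ∩ f ⁻¹' T) :=
    isCompact_Icc.of_isClosed_subset (hc.preimage_isClosed_of_isClosed isClosed_Icc hT)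
      inter_subset_left
  obtain ⟨_, ⟨s, hs, rfl⟩, hsT⟩ := hST
  obtain ⟨t, ⟨ht, htT⟩, hmin⟩ := hK.exists_isLeast ⟨s, hs, hsT⟩
  have hsub : Icc u t ⊆ Icc u v := Icc_subset_Icc_right ht.2
  refine ⟨f '' Icc u t, f t, isSimpleArc_image_Icc ht.1 (hc.mono hsub) (hi.mono hsub),
    image_mono hsub, htT, ?_⟩
  rintro _ ⟨⟨x, hx, rfl⟩, hxT⟩
  exact congrArg f (hx.2.antisymm (hmin ⟨hsub hx, hxT⟩))

lemma union (hS : IsSimpleArc S a b) (hT : IsSimpleArc T b c) (hST : S ∩ T ⊆ {b}) :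
    IsSimpleArc (S ∪ T) a c := by
  rcases eq_or_ne a b with rfl | hab
  · rwa [hS.eq_singleton, singleton_union, insert_eq_of_mem hT.left_mem]
  rcases eq_or_ne b c with rfl | hbc
  · rwa [hT.eq_singleton, union_singleton, insert_eq_of_mem hS.right_mem]
  obtain ⟨f, hf, hfi, rfl, hfb, rfl⟩ := hS.exists_param hab zero_lt_one
  obtain ⟨g, hg, hgi, hgb, rfl, rfl⟩ := hT.exists_param hbc one_lt_two
  let F : ℝ → X := fun t ↦ if t ≤ 1 then f t else g t
  have hFf : EqOn F f (Icc 0 1) := fun t ht ↦ if_pos ht.2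
  have hFg : EqOn F g (Icc 1 2) := fun t ht ↦ by
    rcases ht.1.eq_or_lt with rfl | hlt
    · exact (if_pos le_rfl).trans (hfb.trans hgb.symm)
    · exact if_neg hlt.not_ge
  have hIcc : Icc (0 : ℝ) 2 = Icc 0 1 ∪ Icc 1 2 :=
    (Icc_union_Icc_eq_Icc zero_le_one one_le_two).symm
  refine ⟨0, 2, F, zero_le_two, ?_, ?_, hFf (by simp), hFg (by simp), ?_⟩
  · rw [hIcc]
    exact (hf.congr hFf).union_of_isClosed (hg.congr hFg) isClosed_Icc isClosed_Icc
  · intro s hs t ht hst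
    wlog hle : s ≤ t generalizing s t
    · exact (this ht hs hst.symm (le_of_not_ge hle)).symm
    rw [hIcc] at hs ht
    rcases ht with ht | ht
    · have hs' : s ∈ Icc (0 : ℝ) 1 := ⟨hs.elim And.left fun h ↦ zero_le_one.trans h.1,
        hle.trans ht.2⟩
      exact hfi hs' ht (by rw [← hFf hs', ← hFf ht, hst])
    rcases hs with hs | hs
    · have hsb : F s = b := hST ⟨⟨s, hs, (hFf hs).symm⟩, t, ht, (hFg ht).symm.trans hst.symm⟩
      have hs1 : s = 1 := hfi hs (by simp) (by rw [← hFf hs, hsb, hfb])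
      have ht1 : t = 1 := hgi ht (by simp) (by rw [← hFg ht, ← hst, hsb, hgb])
      rw [hs1, ht1]
    · exact hgi hs ht (by rw [← hFg hs, ← hFg ht, hst])
  · rw [hIcc, image_union, hFf.image_eq, hFg.image_eq]

lemma trans [T2Space X] (hS : IsSimpleArc S a b) (hT : IsSimpleArc T b c) :
    ∃ R ⊆ S ∪ T, IsSimpleArc R a c := by
  obtain ⟨R, d, hR, hRS, hdT, hRT⟩ :=
    hS.exists_subset_inter_subset hT.isCompact.isClosed ⟨b, hS.right_mem, hT.left_mem⟩
  obtain ⟨T₁, T₂, -, hT₂, rfl, -⟩ := hT.exists_union_eq hdT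
  exact ⟨R ∪ T₂, union_subset_union hRS subset_union_right,
    hR.union hT₂ ((inter_subset_inter_right _ subset_union_right).trans hRT)⟩

lemma exists_subset_of_mem_nhds (h : IsSimpleArc S a b) (hab : a ≠ b) {U : Set X}
    (hU : U ∈ 𝓝 a) : ∃ T ⊆ S ∩ U, ∃ c ≠ a, IsSimpleArc T a c := by
  obtain ⟨f, hf, hi, rfl, rfl, rfl⟩ := h.exists_param hab zero_lt_one
  have hmem : f ⁻¹' U ∩ Icc 0 1 ∈ 𝓝[≥] (0 : ℝ) := by
    rw [← nhdsWithin_Icc_eq_nhdsGE zero_lt_one]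
    exact inter_mem (hf 0 (by simp) hU) self_mem_nhdsWithin
  obtain ⟨t, ht, hsub⟩ := mem_nhdsGE_iff_exists_Icc_subset.1 hmem
  have hsub' : Icc 0 t ⊆ Icc (0 : ℝ) 1 := fun s hs ↦ (hsub hs).2
  refine ⟨f '' Icc 0 t, image_subset_iff.2 fun s hs ↦ ⟨mem_image_of_mem f (hsub' hs), (hsub hs).1⟩,
    f t, fun h ↦ ht.ne' (hi (hsub' ⟨ht.le, le_rfl⟩) (by simp) h),
    isSimpleArc_image_Icc ht.le (hf.mono hsub') (hi.mono hsub')⟩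

end IsSimpleArc

lemma isSimpleArc_insert_image_Ici {g : ℝ → X} (hc : ContinuousOn g (Ici 0))
    (hi : InjOn g (Ici 0)) (hp : p ∉ g '' Ici 0) (hlim : Tendsto g atTop (𝓝 p)) :
    IsSimpleArc (insert p (g '' Ici 0)) p (g 0) := by
  let φ : ℝ → ℝ := fun s ↦ s⁻¹ - 1
  have hφ : BijOn φ (Ioc 0 1) (Ici 0) := by
    refine ⟨fun s hs ↦ sub_nonneg.2 ((one_le_inv₀ hs.1).2 hs.2),
      ((sub_left_injective (b := (1 : ℝ))).comp inv_injective).injOn, fun t ht ↦ ?_⟩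
    have ht' : 1 ≤ t + 1 := le_add_of_nonneg_left ht
    exact ⟨(t + 1)⁻¹, ⟨by positivity, inv_le_one_of_one_le₀ ht'⟩, by simp [φ]⟩
  have h0 : (0 : ℝ) ∉ Ioc 0 1 := fun h ↦ lt_irrefl _ h.1
  have hIcc : Icc (0 : ℝ) 1 = insert 0 (Ioc 0 1) := (Ioc_insert_left zero_le_one).symm
  let F : ℝ → X := Function.update (g ∘ φ) 0 p
  have hF0 : F 0 = p := Function.update_self ..
  have hF : EqOn F (g ∘ φ) (Ioc 0 1) := fun s hs ↦ Function.update_of_ne hs.1.ne' ..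
  have himage : F '' Ioc 0 1 = g '' Ici 0 := by rw [hF.image_eq, image_comp, hφ.image_eq]
  refine ⟨0, 1, F, zero_le_one, ?_, ?_, hF0, ?_, ?_⟩
  · rw [hIcc, continuousOn_update_iff, insert_sdiff_self_of_notMem h0]
    refine ⟨hc.comp ((continuousOn_inv₀.mono fun s hs ↦ hs.1.ne').sub continuousOn_const) hφ.mapsTo,
      fun _ ↦ ?_⟩
    have hφlim : Tendsto φ (𝓝[>] 0) atTop :=
      tendsto_atTop_add_const_right _ _ tendsto_inv_nhdsGT_zero
    exact (hlim.comp hφlim).mono_left (nhdsWithin_mono _ Ioc_subset_Ioi_self)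
  · rw [hIcc, injOn_insert h0, himage, hF0]
    exact ⟨(hi.comp hφ.injOn hφ.mapsTo).congr hF.symm, hp⟩
  · rw [hF (by simp)]
    simp [φ]
  · rw [hIcc, image_insert_eq, himage, hF0]

lemma exists_continuousOn_Ici {y : ℕ → X} {f : ℕ → ℝ → X}
    (hc : ∀ n : ℕ, ContinuousOn (f n) (Icc n (n + 1))) (hl : ∀ n : ℕ, f n n = y n)
    (hr : ∀ n : ℕ, f n (n + 1) = y (n + 1)) :
    ∃ g : ℝ → X, ContinuousOn g (Ici 0) ∧ ∀ n : ℕ, EqOn g (f n) (Icc n (n + 1)) := by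
  let g : ℝ → X := fun t ↦ f ⌊t⌋₊ t
  have hg : ∀ n : ℕ, EqOn g (f n) (Icc n (n + 1)) := by
    rintro n t ⟨hnt, htn⟩
    rcases htn.eq_or_lt with rfl | hlt
    · have hfloor : ⌊(n : ℝ) + 1⌋₊ = n + 1 := mod_cast Nat.floor_natCast (n + 1)
      simp only [g, hfloor, hr]
      exact_mod_cast hl (n + 1)
    · simp only [g, (Nat.floor_eq_iff (n.cast_nonneg.trans hnt)).2 ⟨hnt, hlt⟩]
  have hfinite : LocallyFinite fun n : ℕ ↦ Icc (n : ℝ) (n + 1) := fun x ↦ by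
    obtain ⟨N, hN⟩ := exists_nat_gt x
    refine ⟨Iio N, Iio_mem_nhds hN, (finite_Iio N).subset ?_⟩
    rintro n ⟨t, ht, htN⟩
    exact Nat.cast_lt.1 (ht.1.trans_lt htN)
  have hcover : Ici (0 : ℝ) ⊆ ⋃ n : ℕ, Icc (n : ℝ) (n + 1) := fun t ht ↦
    mem_iUnion.2 ⟨⌊t⌋₊, Nat.floor_le ht, (Nat.lt_floor_add_one t).le⟩
  exact ⟨g, (hfinite.continuousOn_iUnion (fun _ ↦ isClosed_Icc)
    fun n ↦ (hc n).congr (hg n)).mono hcover, hg⟩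

lemma exists_isSimpleArc_insert_iUnion {y : ℕ → X} {P : ℕ → Set X}
    (hP : ∀ n, IsSimpleArc (P n) (y n) (y (n + 1))) (hy : ∀ n, y n ≠ y (n + 1))
    (hinter : ∀ n m, n < m → P n ∩ P m ⊆ {y (n + 1)}) (hp : ∀ n, p ∉ P n)
    (hlim : Tendsto P atTop (𝓝 p).smallSets) :
    IsSimpleArc (insert p (⋃ n, P n)) p (y 0) := by
  choose f hc hi hl hr himage using fun n : ℕ ↦ (hP n).exists_param (hy n) (lt_add_one (n : ℝ))
  obtain ⟨g, hgc, hg⟩ := exists_continuousOn_Ici hc hl hr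
  have hfloor : ∀ t ∈ Ici (0 : ℝ), t ∈ Icc (⌊t⌋₊ : ℝ) (⌊t⌋₊ + 1) := fun t ht ↦
    ⟨Nat.floor_le ht, (Nat.lt_floor_add_one t).le⟩
  have hgP : ∀ n : ℕ, g '' Icc n (n + 1) = P n := fun n ↦ (hg n).image_eq.trans (himage n)
  have hmem : ∀ t ∈ Ici (0 : ℝ), g t ∈ P ⌊t⌋₊ := fun t ht ↦
    hgP _ ▸ mem_image_of_mem g (hfloor t ht)
  have hgi : InjOn g (Ici 0) := by
    intro s hs t ht hst
    wlog hle : ⌊s⌋₊ ≤ ⌊t⌋₊ generalizing s t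
    · exact (this ht hs hst.symm (le_of_not_ge hle)).symm
    rcases hle.eq_or_lt with heq | hlt
    · have ht' := heq ▸ hfloor t ht
      exact hi ⌊s⌋₊ (hfloor s hs) ht' (by rw [← hg _ (hfloor s hs), ← hg _ ht', hst])
    · have hgs : g s = y (⌊s⌋₊ + 1) := hinter _ _ hlt ⟨hmem s hs, hst ▸ hmem t ht⟩
      refine absurd (hi ⌊s⌋₊ (hfloor s hs) (by simp) ?_) (Nat.lt_floor_add_one s).ne
      rw [← hg _ (hfloor s hs), hgs, hr]
  have hrange : g '' Ici 0 = ⋃ n, P n := by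
    refine Subset.antisymm (image_subset_iff.2 fun t ht ↦ mem_iUnion.2 ⟨_, hmem t ht⟩) ?_
    exact iUnion_subset fun n ↦ hgP n ▸ image_mono fun t ht ↦ n.cast_nonneg.trans ht.1
  have hglim : Tendsto g atTop (𝓝 p) := (hlim.comp tendsto_nat_floor_atTop).of_smallSets <|
    (eventually_ge_atTop 0).mono hmem
  have hg0 : g 0 = y 0 := by
    rw [hg 0 (by simp)]
    exact_mod_cast hl 0
  rw [← hrange, ← hg0]
  refine isSimpleArc_insert_image_Ici hgc hgi ?_ hglim
  rw [hrange, mem_iUnion]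
  exact fun ⟨n, hn⟩ ↦ hp n hn

end SimpleArcs

lemma isSimpleArc_segment {E : Type*} [AddCommGroup E] [Module ℝ E] [TopologicalSpace E]
    [IsTopologicalAddGroup E] [ContinuousSMul ℝ E] (x y : E) :
    IsSimpleArc (segment ℝ x y) x y := by
  rcases eq_or_ne x y with rfl | hxy
  · rw [segment_same]
    exact IsSimpleArc.singleton x
  · rw [segment_eq_image_lineMap]
    exact ⟨0, 1, AffineMap.lineMap x y, zero_le_one, AffineMap.lineMap_continuous.continuousOn,
      (AffineMap.lineMap_injective ℝ hxy).injOn, AffineMap.lineMap_apply_zero x y,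
      AffineMap.lineMap_apply_one x y, rfl⟩

lemma SameFace.exists_isSimpleArc {E : Type*} [NormedAddCommGroup E] [NormedSpace ℝ E] {K : Set E}
    {a b : E} (hK : IsClosed K) (h : SameFace K a b) : ∃ S, IsSimpleArc S a b ∧ Disjoint S K := by
  have ha := mem_connectedComponentIn (F := Kᶜ) h.left_notMem
  refine IsPreconnected.induction₂ (s := connectedComponentIn Kᶜ a)
    isPreconnected_connectedComponentIn (fun x y ↦ ∃ S, IsSimpleArc S x y ∧ Disjoint S K)
    ?_ ?_ ?_ ha h
  · intro x hx
    obtain ⟨ε, hε, hball⟩ :=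
      Metric.isOpen_iff.1 hK.isOpen_compl x (connectedComponentIn_subset _ _ hx)
    filter_upwards [mem_nhdsWithin_of_mem_nhds (Metric.ball_mem_nhds x hε)] with y hy
    exact ⟨_, isSimpleArc_segment x y, subset_compl_iff_disjoint_right.1
      (((convex_ball x ε).segment_subset (Metric.mem_ball_self hε) hy).trans hball)⟩
  · rintro x y z - - - ⟨S, hS, hSK⟩ ⟨T, hT, hTK⟩
    obtain ⟨R, hR, hRa⟩ := hS.trans hT
    exact ⟨R, hRa, (hSK.union_left hTK).mono_left hR⟩
  · rintro x y - - ⟨S, hS, hSK⟩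
    exact ⟨S, hS.symm, hSK⟩

section Accessibility

variable {X : Type*} [TopologicalSpace X] {p : X} {W : Set X} {B V : ℕ → Set X}

/-- A stage in the construction of an arc in `insert p W` that ends at `p`, where `B` is a basis of
neighbourhoods of `p`: an arc in `W` which starts outside `B level` and whose other endpoint is so
close to `p` that `V level` contains it. -/
structure AccessStage (W : Set X) (B V : ℕ → Set X) where
  level : ℕ
  start : X
  arc : Set X
  start_notMem : start ∉ B level
  arc_subset : arc ⊆ W
  exists_isSimpleArc : ∃ x ∈ V level, IsSimpleArc arc start x

lemma AccessStage.start_mem (s : AccessStage W B V) : s.start ∈ s.arc :=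
  let ⟨_, _, h⟩ := s.exists_isSimpleArc
  h.left_mem

variable [T2Space X] (hB : (𝓝 p).HasAntitoneBasis B) (hV : ∀ n, V n ∈ 𝓝 p)
  (hVB : ∀ n, ∀ x ∈ W ∩ V n, ∀ y ∈ W ∩ V n, ∃ S ⊆ W ∩ B n, IsSimpleArc S x y)
  (hpW : p ∉ W) (hp : p ∈ closure W)

include hB hV hVB hpW hp

lemma AccessStage.nonempty : Nonempty (AccessStage W B V) := by
  obtain ⟨y, hyV, hyW⟩ := mem_closure_iff_nhds.1 hp _ (hV 0)
  obtain ⟨n, hn⟩ := hB.mem_iff.1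
    (isClosed_singleton.isOpen_compl.mem_nhds (ne_of_mem_of_not_mem hyW hpW).symm)
  obtain ⟨x, hxV, hxW⟩ := mem_closure_iff_nhds.1 hp _ (inter_mem (hV 0) (hV n))
  obtain ⟨A, hAW, hA⟩ := hVB 0 y ⟨hyW, hyV⟩ x ⟨hxW, hxV.1⟩
  exact ⟨n, y, A, fun h ↦ hn h rfl, hAW.trans inter_subset_left, x, hxV.2, hA⟩

lemma AccessStage.exists_next (s : AccessStage W B V) :
    ∃ (t : AccessStage W B V) (P : Set X), IsSimpleArc P s.start t.start ∧ s.level < t.level ∧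
      P ⊆ s.arc ∧ P ∩ t.arc ⊆ {t.start} ∧ t.arc ⊆ B s.level ∧ Disjoint s.arc (B t.level) := by
  obtain ⟨x, hxV, hs⟩ := s.exists_isSimpleArc
  obtain ⟨m, hm⟩ := hB.mem_iff.1 (hs.isCompact.isClosed.isOpen_compl.mem_nhds
    fun h ↦ hpW (s.arc_subset h))
  let n := max m (s.level + 1)
  have hdisj : Disjoint (B n) s.arc := subset_compl_iff_disjoint_right.1
    ((hB.antitone (le_max_left _ _)).trans hm)
  obtain ⟨z, hzV, hzW⟩ := mem_closure_iff_nhds.1 hp _ (inter_mem (hV s.level) (hV n))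
  obtain ⟨T, hTW, hT⟩ := hVB s.level x ⟨s.arc_subset hs.right_mem, hxV⟩ z ⟨hzW, hzV.1⟩
  obtain ⟨P, y, hP, hPs, hyT, hPT⟩ := hs.exists_subset_inter_subset hT.isCompact.isClosed
    ⟨x, hs.right_mem, hT.left_mem⟩
  obtain ⟨T₁, T₂, -, hT₂, rfl, -⟩ := hT.exists_union_eq hyT
  obtain ⟨hTW, hTB⟩ := subset_inter_iff.1 (subset_union_right.trans hTW)
  exact ⟨⟨n, y, T₂, fun h ↦ disjoint_left.1 hdisj h (hPs hP.right_mem), hTW, z, hzV.2, hT₂⟩, P, hP,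
    (Nat.lt_succ_self _).trans_le (le_max_right _ _), hPs,
    (inter_subset_inter_right _ subset_union_right).trans hPT, hTB, hdisj.symm⟩

lemma exists_isSimpleArc_of_hasAntitoneBasis : ∃ S ⊆ insert p W, ∃ x ∈ W, IsSimpleArc S p x := by
  obtain ⟨s₀⟩ := AccessStage.nonempty hB hV hVB hpW hp
  choose next P hP hlevel hPs hPnext hnext hdisj using AccessStage.exists_next hB hV hVB hpW hp
  let s : ℕ → AccessStage W B V := fun n ↦ next^[n] s₀
  have hs : ∀ n, s (n + 1) = next (s n) := fun n ↦ Function.iterate_succ_apply' next n s₀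
  have hmono : StrictMono fun n ↦ (s n).level := strictMono_nat_of_lt_succ fun n ↦ by
    simpa only [hs] using hlevel (s n)
  have hsucc : ∀ n, (s (n + 1)).arc ⊆ B (s n).level := fun n ↦ hs n ▸ hnext (s n)
  have hPW : ∀ n, P (s n) ⊆ W := fun n ↦ (hPs _).trans (s n).arc_subset
  have hinter : ∀ n m, n < m → P (s n) ∩ P (s m) ⊆ {(s (n + 1)).start} := by
    intro n m hnm
    rcases (Nat.succ_le_of_lt hnm).eq_or_lt with rfl | hlt
    · rw [Nat.succ_eq_add_one, hs]
      exact (inter_subset_inter_right _ (hPs _)).trans (hPnext (s n))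
    · obtain ⟨k, rfl⟩ := Nat.exists_eq_add_of_lt hlt
      have hsub : P (s (n + 1 + k + 1)) ⊆ B (s (n + 1)).level := (hPs _).trans <|
        (hsucc _).trans (hB.antitone (hmono.monotone (Nat.le_add_right _ _)))
      have hd : Disjoint (P (s n)) (P (s (n + 1 + k + 1))) :=
        (hdisj (s n)).mono (hPs _) (hs n ▸ hsub)
      exact hd.inter_eq.trans_subset (empty_subset _)
  have hlim : Tendsto (fun n ↦ P (s n)) atTop (𝓝 p).smallSets := by
    refine (tendsto_add_atTop_iff_nat 1).1 ?_
    exact (hB.tendsto_smallSets.comp hmono.tendsto_atTop).smallSets_mono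
      (Eventually.of_forall fun n ↦ (hPs _).trans (hsucc n))
  refine ⟨_, insert_subset_insert (iUnion_subset hPW), s₀.start, ?_,
    exists_isSimpleArc_insert_iUnion (y := fun n ↦ (s n).start) (fun n ↦ ?_) (fun n ↦ ?_) hinter
      (fun n h ↦ hpW (hPW n h)) hlim⟩
  · exact hPW 0 (hP s₀).left_mem
  · simpa only [hs] using hP (s n)
  · exact (ne_of_mem_of_not_mem (hsucc n (s (n + 1)).start_mem) (s n).start_notMem).symm

end Accessibility

lemma exists_isSimpleArc_insert {X : Type*} [TopologicalSpace X] [T2Space X]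
    [FirstCountableTopology X] {p : X} {W U : Set X} (hpW : p ∉ W) (hp : p ∈ closure W)
    (hW : ∀ U ∈ 𝓝 p, ∃ V ∈ 𝓝 p, ∀ x ∈ W ∩ V, ∀ y ∈ W ∩ V, ∃ S ⊆ W ∩ U, IsSimpleArc S x y)
    (hU : U ∈ 𝓝 p) : ∃ S ⊆ insert p W ∩ U, ∃ x ∈ W, IsSimpleArc S p x := by
  obtain ⟨B, hB⟩ := (𝓝 p).exists_antitone_basis
  choose V hV hVB using fun n ↦ hW (B n) (hB.mem n)
  obtain ⟨S, hS, x, hxW, hSx⟩ := exists_isSimpleArc_of_hasAntitoneBasis hB hV hVB hpW hp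
  obtain ⟨T, hT, y, hyp, hTy⟩ :=
    hSx.exists_subset_of_mem_nhds (ne_of_mem_of_not_mem hxW hpW).symm hU
  have hT' := hT.trans (inter_subset_inter_left U hS)
  exact ⟨T, hT', y, (hT' hTy.right_mem).1.resolve_left hyp, hTy⟩

lemma IsOpenArc.exists_isSimpleArc_insert_face {σ U : Set ℂ} {p a : ℂ} (hσ : IsOpenArc σ)
    (hsep : ¬IsPreconnected σᶜ) (hp : p ∈ σ) (ha : a ∉ σ) (hU : U ∈ 𝓝 p) :
    ∃ S ⊆ insert p (connectedComponentIn σᶜ a) ∩ U, ∃ x, SameFace σ a x ∧ IsSimpleArc S p x := by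
  have hclosed := hσ.isClosed
  refine exists_isSimpleArc_insert (fun h ↦ connectedComponentIn_subset _ _ h hp)
    (mem_closure_connectedComponentIn_compl hσ hsep hp ha) (fun U hU ↦ ?_) hU
  obtain ⟨r, hr, hrU⟩ := Metric.mem_nhds_iff.1 hU
  obtain ⟨δ, hδ, -, hlocal⟩ := SameFace.exists_ball_forall_union_compl_ball hσ hp hr
  refine ⟨Metric.ball p δ, Metric.ball_mem_nhds p hδ, fun x hx y hy ↦ ?_⟩
  have hax : SameFace σ a x := hx.1
  obtain ⟨S, hS, hdisj⟩ := (hlocal x hx.2 y hy.2 (hax.symm.trans hy.1)).exists_isSimpleArc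
    (hclosed.union Metric.isOpen_ball.isClosed_compl)
  rw [disjoint_union_right, disjoint_compl_right_iff_subset] at hdisj
  exact ⟨S, fun z hz ↦ ⟨hax.trans (.of_isPreconnected hS.isPreconnected hdisj.1 hS.left_mem hz),
    hrU (hdisj.2 hz)⟩, hS⟩

/-! ### Dual paths -/

lemma disjoint_of_inter_sUnion_subset {X : Type*} {A : Set (Set X)} {S σ τ : Set X} {p : X}
    (hp : p ∉ multiplePoints A) (hσ : σ ∈ A) (hpσ : p ∈ σ)
    (hS : S ∩ ⋃₀ A ⊆ {p}) (hτ : τ ∈ A) (hne : τ ≠ σ) : Disjoint S τ := by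
  rw [disjoint_left]
  intro z hzS hzτ
  obtain rfl : z = p := hS ⟨hzS, τ, hτ, hzτ⟩
  exact hp ⟨τ, hτ, σ, hσ, hne, hzτ, hpσ⟩

section DualPaths

variable {X Y : Type*} [TopologicalSpace X] [TopologicalSpace Y] {A : Set (Set X)}
  {S σ γ : Set X} {a b p : X}

lemma CrossesAt.image (h : CrossesAt σ γ p) (e : X ≃ₜ Y) :
    CrossesAt (e '' σ) (e '' γ) (e p) := by
  obtain ⟨hpσ, hpγ, hlocal⟩ := h
  refine ⟨mem_image_of_mem e hpσ, mem_image_of_mem e hpγ, fun U hU ↦ ?_⟩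
  obtain ⟨V, hV, hVU, C₁, C₂, hC, hdisj, hC₁, hC₂, hγ₁, hγ₂⟩ :=
    hlocal (e ⁻¹' U) (e.continuous.continuousAt.preimage_mem_nhds hU)
  refine ⟨e '' V, e.isOpenMap.image_mem_nhds hV, image_subset_iff.2 hVU, e '' C₁, e '' C₂, ?_,
    (disjoint_image_iff e.injective).2 hdisj, e.isPreconnected_image.2 hC₁,
    e.isPreconnected_image.2 hC₂, ?_, ?_⟩
  · rw [← image_sdiff e.injective, hC, image_union]
  · exact image_inter e.injective ▸ hγ₁.image e
  · exact image_inter e.injective ▸ hγ₂.image e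

lemma IsArrangementOfArcs.image (hA : IsArrangementOfArcs A) (e : X ≃ₜ Y) :
    IsArrangementOfArcs ((e '' ·) '' A) where
  finite := hA.finite.image _
  isOpenArc := forall_mem_image.2 fun σ hσ ↦ (hA.isOpenArc σ hσ).image e
  not_isPreconnected_compl := forall_mem_image.2 fun σ hσ h ↦
    hA.not_isPreconnected_compl σ hσ (e.isPreconnected_image.1 (e.image_compl σ ▸ h))
  subsingleton_inter := forall_mem_image.2 fun σ hσ ↦ forall_mem_image.2 fun τ hτ hne ↦ by
    rw [← image_inter e.injective]
    exact (hA.subsingleton_inter σ hσ τ hτ fun h ↦ hne (h ▸ rfl)).image e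
  crossesAt := forall_mem_image.2 fun σ hσ ↦ forall_mem_image.2 fun τ hτ hne ↦ by
    rw [← image_inter e.injective]
    exact forall_mem_image.2 fun p hp ↦
      (hA.crossesAt σ hσ τ hτ (fun h ↦ hne (h ▸ rfl)) p hp).image e

/-- `S` is a dual path of `A` from `a` to `b`: a simple arc which avoids the crossing points of `A`
and meets every arc of `A` at most once, crossing it there. -/
structure IsDualPath (A : Set (Set X)) (S : Set X) (a b : X) : Prop where
  isSimpleArc : IsSimpleArc S a b
  disjoint_multiplePoints : Disjoint S (multiplePoints A)
  subsingleton_inter : ∀ σ ∈ A, (S ∩ σ).Subsingleton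
  crossesAt : ∀ σ ∈ A, ∀ p ∈ S ∩ σ, CrossesAt σ S p

lemma IsDualPath.image (h : IsDualPath A S a b) (e : X ≃ₜ Y) :
    IsDualPath ((e '' ·) '' A) (e '' S) (e a) (e b) where
  isSimpleArc := h.isSimpleArc.image e
  disjoint_multiplePoints := by
    rw [disjoint_left, forall_mem_image]
    rintro p hp ⟨_, ⟨σ, hσ, rfl⟩, _, ⟨τ, hτ, rfl⟩, hne, hpσ, hpτ⟩
    exact disjoint_left.1 h.disjoint_multiplePoints hp ⟨σ, hσ, τ, hτ, fun h ↦ hne (h ▸ rfl),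
      e.injective.mem_set_image.1 hpσ, e.injective.mem_set_image.1 hpτ⟩
  subsingleton_inter := forall_mem_image.2 fun σ hσ ↦ by
    rw [← image_inter e.injective]
    exact (h.subsingleton_inter σ hσ).image e
  crossesAt := forall_mem_image.2 fun σ hσ ↦ by
    rw [← image_inter e.injective]
    exact forall_mem_image.2 fun p hp ↦ (h.crossesAt σ hσ p hp).image e

/-- `S` is a simple arc from `a` to `b` which meets no arc of `A` more often than the position of
`a` and `b` forces it to, and avoids the crossing points of `A`. -/
structure IsMinimalArc (A : Set (Set X)) (S : Set X) (a b : X) : Prop where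
  isSimpleArc : IsSimpleArc S a b
  disjoint_multiplePoints : Disjoint S (multiplePoints A)
  subsingleton_inter : ∀ σ ∈ A, (S ∩ σ).Subsingleton
  disjoint_of_sameFace : ∀ σ ∈ A, SameFace σ a b → Disjoint S σ

lemma IsMinimalArc.of_disjoint_sUnion (hS : IsSimpleArc S a b) (hdisj : Disjoint S (⋃₀ A)) :
    IsMinimalArc A S a b := by
  have hdisj' : ∀ σ ∈ A, Disjoint S σ := disjoint_sUnion_right.1 hdisj
  refine ⟨hS, ?_, fun σ hσ ↦ ?_, fun σ hσ _ ↦ hdisj' σ hσ⟩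
  · exact hdisj.mono_right (multiplePoints_subset_sUnion A)
  · rw [(hdisj' σ hσ).inter_eq]
    exact subsingleton_empty

lemma IsMinimalArc.exists_of_crossing [T2Space X] {R : Set X} {x : X}
    (hS : IsMinimalArc A S x b) (hR : IsSimpleArc R a x) (hp : p ∉ multiplePoints A) (hσ : σ ∈ A)
    (hpσ : p ∈ σ) (hRA : R ∩ ⋃₀ A ⊆ {p}) (hxb : SameFace σ x b) (hab : ¬SameFace σ a b) :
    ∃ T, IsMinimalArc A T a b := by
  obtain ⟨T, hT, hTa⟩ := hR.trans hS.isSimpleArc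
  have hSσ : Disjoint S σ := hS.disjoint_of_sameFace σ hσ hxb
  have hRτ : ∀ τ ∈ A, τ ≠ σ → Disjoint R τ := fun τ hτ hne ↦
    disjoint_of_inter_sUnion_subset hp hσ hpσ hRA hτ hne
  refine ⟨T, hTa, ?_, fun τ hτ ↦ ?_, fun τ hτ hτab ↦ ?_⟩
  · have hRmult : Disjoint R (multiplePoints A) := by
      rw [disjoint_left]
      intro z hzR hz
      obtain rfl : z = p := hRA ⟨hzR, multiplePoints_subset_sUnion A hz⟩
      exact hp hz
    exact (hRmult.union_left hS.disjoint_multiplePoints).mono_left hT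
  · refine Subsingleton.anti ?_ (inter_subset_inter_left τ hT)
    rw [union_inter_distrib_right]
    rcases eq_or_ne τ σ with rfl | hne
    · rw [hSσ.inter_eq, union_empty]
      exact subsingleton_singleton.anti
        ((inter_subset_inter_right R (subset_sUnion_of_mem hτ)).trans hRA)
    · rw [(hRτ τ hτ hne).inter_eq, empty_union]
      exact hS.subsingleton_inter τ hτ
  · have hne : τ ≠ σ := fun h ↦ hab (h ▸ hτab)
    have hax : SameFace τ a x :=
      .of_isPreconnected hR.isPreconnected (hRτ τ hτ hne) hR.left_mem hR.right_mem
    exact ((hRτ τ hτ hne).union_left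
      (hS.disjoint_of_sameFace τ hτ (hax.symm.trans hτab))).mono_left hT

lemma IsSimpleArc.mem_closure_inter_connectedComponentIn_compl (hS : IsSimpleArc S p a)
    (hSσ : S ∩ σ ⊆ {p}) (hpσ : p ∈ σ) (ha : a ∉ σ) :
    p ∈ closure (S ∩ connectedComponentIn σᶜ a) := by
  refine mem_closure_iff_nhds.2 fun U hU ↦ ?_
  obtain ⟨T, hT, c, hcp, hTc⟩ := hS.exists_subset_of_mem_nhds (ne_of_mem_of_not_mem hpσ ha) hU
  obtain ⟨hcS, hcU⟩ := hT hTc.right_mem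
  obtain ⟨S₁, S₂, hS₁, hS₂, hS₁₂, hinter⟩ := hS.exists_union_eq hcS
  have hdisj : Disjoint S₂ σ := by
    rw [disjoint_left]
    intro z hz hzσ
    obtain rfl : z = p := hSσ ⟨hS₁₂ ▸ Or.inr hz, hzσ⟩
    exact hcp (hinter ⟨hS₁.left_mem, hz⟩).symm
  exact ⟨c, hcU, hcS,
    SameFace.of_isPreconnected hS₂.isPreconnected hdisj hS₂.right_mem hS₂.left_mem⟩

end DualPaths

lemma CrossesAt.of_mem_closure_inter_face {σ γ : Set ℂ} {a b p : ℂ} (hσ : IsOpenArc σ)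
    (hab : ¬SameFace σ a b) (hpσ : p ∈ σ) (hpγ : p ∈ γ)
    (hpa : p ∈ closure (γ ∩ connectedComponentIn σᶜ a))
    (hpb : p ∈ closure (γ ∩ connectedComponentIn σᶜ b)) : CrossesAt σ γ p := by
  refine ⟨hpσ, hpγ, fun U hU ↦ ?_⟩
  obtain ⟨r, hr, hrU⟩ := Metric.mem_nhds_iff.1 hU
  obtain ⟨δ, hδ, hδr, hlocal⟩ := SameFace.exists_ball_forall_union_compl_ball hσ hpσ hr
  obtain ⟨x, hxδ, hxγ, hax⟩ := mem_closure_iff_nhds.1 hpa _ (Metric.ball_mem_nhds p hδ)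
  obtain ⟨y, hyδ, hyγ, hby⟩ := mem_closure_iff_nhds.1 hpb _ (Metric.ball_mem_nhds p hδ)
  replace hax : SameFace σ a x := hax
  replace hby : SameFace σ b y := hby
  have hxy : ¬SameFace σ x y := fun h ↦ hab ((hax.trans h).trans hby.symm)
  let C : ℂ → Set ℂ := connectedComponentIn (σ ∪ (Metric.ball p r)ᶜ)ᶜ
  have hC : ∀ z, C z ⊆ Metric.ball p r \ σ := fun z w hw ↦ by
    have hw' := connectedComponentIn_subset _ _ hw
    simpa [and_comm] using hw'
  have hCσ : ∀ z w, w ∈ C z → SameFace σ z w := fun z w hw ↦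
    SameFace.anti subset_union_left hw
  have hxC := hlocal x hxδ x hxδ (.refl hax.right_notMem)
  have hyC := hlocal y hyδ y hyδ (.refl hby.right_notMem)
  have hball : Metric.ball p δ \ σ ⊆ C x ∪ C y := fun z hz ↦ by
    by_cases hxz : SameFace σ x z
    · exact Or.inl (hlocal x hxδ z hz.1 hxz)
    · exact Or.inr (hlocal y hyδ z hz.1
        (.of_not_sameFace hσ hpσ hax.right_notMem hz.2 hby.right_notMem hxz hxy))
  refine ⟨Metric.ball p δ ∪ (C x ∪ C y),
    mem_of_superset (Metric.ball_mem_nhds p hδ) subset_union_left,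
    (union_subset (Metric.ball_subset_ball hδr)
      (union_subset ((hC x).trans sdiff_subset) ((hC y).trans sdiff_subset))).trans hrU,
    C x, C y, ?_, ?_, isPreconnected_connectedComponentIn, isPreconnected_connectedComponentIn,
    ⟨x, hxγ, hxC⟩, ⟨y, hyγ, hyC⟩⟩
  · have hCdisj : Disjoint (C x ∪ C y) σ :=
      (disjoint_sdiff_left.mono_left (hC x)).union_left (disjoint_sdiff_left.mono_left (hC y))
    rw [union_sdiff_distrib, hCdisj.sdiff_eq_left, union_eq_self_of_subset_left hball]
  · exact disjoint_left.2 fun z hxz hyz ↦ hxy ((hCσ x z hxz).trans (hCσ y z hyz).symm)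

lemma IsSimpleArc.crossesAt {S σ : Set ℂ} {a b p : ℂ} (hS : IsSimpleArc S a b)
    (hσ : IsOpenArc σ) (ha : a ∉ σ) (hb : b ∉ σ) (hab : ¬SameFace σ a b)
    (hSσ : (S ∩ σ).Subsingleton) (hp : p ∈ S ∩ σ) : CrossesAt σ S p := by
  obtain ⟨S₁, S₂, hS₁, hS₂, rfl, -⟩ := hS.exists_union_eq hp.1
  have hsub : (S₁ ∪ S₂) ∩ σ ⊆ {p} := fun z hz ↦ hSσ hz hp
  refine .of_mem_closure_inter_face hσ hab hp.2 hp.1 ?_ ?_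
  · exact closure_mono (inter_subset_inter_left _ subset_union_left)
      (hS₁.symm.mem_closure_inter_connectedComponentIn_compl
        ((inter_subset_inter_left _ subset_union_left).trans hsub) hp.2 ha)
  · exact closure_mono (inter_subset_inter_left _ subset_union_right)
      (hS₂.mem_closure_inter_connectedComponentIn_compl
        ((inter_subset_inter_left _ subset_union_right).trans hsub) hp.2 hb)

namespace IsArrangementOfArcs

section Plane

variable {A : Set (Set ℂ)} {σ : Set ℂ} {a b p : ℂ}

lemma exists_mem_closure_face (hA : IsArrangementOfArcs A) (ha : a ∉ ⋃₀ A) (hb : b ∉ ⋃₀ A)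
    (hab : ¬SameFace (⋃₀ A) a b) :
    ∃ σ ∈ A, ¬SameFace σ a b ∧ ∃ p ∈ σ, p ∉ multiplePoints A ∧
      p ∈ closure (connectedComponentIn (⋃₀ A)ᶜ a) := by
  have hface : SameFace (⋃₀ {σ ∈ A | SameFace σ a b} ∪ multiplePoints A) a b :=
    (hA.mono (sep_subset _ _)).sameFace_sUnion_union hA.finite_multiplePoints
      (fun h ↦ ha (multiplePoints_subset_sUnion A h))
      (fun h ↦ hb (multiplePoints_subset_sUnion A h)) fun σ hσ ↦ hσ.2
  obtain ⟨p, ⟨σ, hσ, hpσ⟩, hpa, hp⟩ := hface.exists_mem_closure_face hA.isClosed_sUnion ha hab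
  have hpnot := hp.right_notMem
  exact ⟨σ, hσ, fun h ↦ hpnot (Or.inl ⟨σ, ⟨hσ, h⟩, hpσ⟩), p, hpσ, fun h ↦ hpnot (Or.inr h), hpa⟩

lemma exists_isSimpleArc_inter_sUnion_subset (hA : IsArrangementOfArcs A) (hσ : σ ∈ A)
    (hpσ : p ∈ σ) (hp : p ∉ multiplePoints A)
    (hpa : p ∈ closure (connectedComponentIn (⋃₀ A)ᶜ a)) (ha : a ∉ ⋃₀ A) (hb : b ∉ σ) :
    ∃ R x, IsSimpleArc R a x ∧ R ∩ ⋃₀ A ⊆ {p} ∧ SameFace σ x b := by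
  have hσA : σ ⊆ ⋃₀ A := subset_sUnion_of_mem hσ
  have hopen : IsOpen (⋃₀ (A \ {σ}))ᶜ := (hA.mono sdiff_subset).isClosed_sUnion.isOpen_compl
  obtain ⟨r, hr, hball⟩ := Metric.isOpen_iff.1 hopen p fun ⟨τ, hτ, hpτ⟩ ↦
    hp ⟨τ, hτ.1, σ, hσ, hτ.2, hpτ, hpσ⟩
  have hball' : ⋃₀ A ⊆ σ ∪ (Metric.ball p r)ᶜ := by
    rintro z ⟨τ, hτ, hzτ⟩
    by_cases hne : τ = σ
    · exact Or.inl (hne ▸ hzτ)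
    · exact Or.inr fun hz ↦ hball hz ⟨τ, ⟨hτ, hne⟩, hzτ⟩
  obtain ⟨δ, hδ, hδr, hlocal⟩ := SameFace.exists_ball_forall_union_compl_ball (hA.isOpenArc σ hσ)
    hpσ hr
  have hsmall : ∀ w, (insert p (connectedComponentIn σᶜ w) ∩ Metric.ball p δ) ∩ ⋃₀ A ⊆ {p} := by
    rintro w z ⟨⟨hz, hzδ⟩, hzA⟩
    refine hz.resolve_right fun hz ↦ ?_
    exact (hball' hzA).elim (connectedComponentIn_subset _ _ hz)
      (not_not.2 (Metric.ball_subset_ball hδr hzδ))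
  have haccess : ∀ w ∉ σ, ∃ S ⊆ insert p (connectedComponentIn σᶜ w) ∩ Metric.ball p δ,
      ∃ x, SameFace σ w x ∧ IsSimpleArc S p x := fun w hw ↦
    (hA.isOpenArc σ hσ).exists_isSimpleArc_insert_face (hA.not_isPreconnected_compl σ hσ) hpσ hw
      (Metric.ball_mem_nhds p hδ)
  obtain ⟨S, hS, x, hax, hSx⟩ := haccess a fun h ↦ ha (hσA h)
  obtain ⟨T, hT, y, hby, hTy⟩ := haccess b hb
  obtain ⟨z, hzδ, haz⟩ := mem_closure_iff_nhds.1 hpa _ (Metric.ball_mem_nhds p hδ)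
  replace haz : SameFace (⋃₀ A) a z := haz
  have hzx : SameFace (⋃₀ A) z x := (hlocal z hzδ x (hS hSx.right_mem).2
    ((haz.anti hσA).symm.trans hax)).anti hball'
  obtain ⟨Q, hQ, hQA⟩ := (haz.trans hzx).exists_isSimpleArc hA.isClosed_sUnion
  obtain ⟨Q', hQ', hQp⟩ := hQ.trans hSx.symm
  obtain ⟨R, hR, hRy⟩ := hQp.trans hTy
  refine ⟨R, y, hRy, ?_, hby.symm⟩
  rintro w ⟨hwR, hwA⟩
  rcases hR hwR with hw | hw
  · rcases hQ' hw with hw | hw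
    · exact absurd hwA (disjoint_left.1 hQA hw)
    · exact hsmall a ⟨hS hw, hwA⟩
  · exact hsmall b ⟨hT hw, hwA⟩

lemma exists_isMinimalArc (hA : IsArrangementOfArcs A) (ha : a ∉ ⋃₀ A) (hb : b ∉ ⋃₀ A) :
    ∃ S, IsMinimalArc A S a b := by
  induction hn : {σ ∈ A | ¬SameFace σ a b}.ncard using Nat.strong_induction_on generalizing a with
  | _ n ih =>
    by_cases hab : SameFace (⋃₀ A) a b
    · obtain ⟨S, hS, hSA⟩ := hab.exists_isSimpleArc hA.isClosed_sUnion
      exact ⟨S, .of_disjoint_sUnion hS hSA⟩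
    obtain ⟨σ, hσ, hσab, p, hpσ, hp, hpa⟩ := hA.exists_mem_closure_face ha hb hab
    obtain ⟨R, x, hR, hRA, hxb⟩ := hA.exists_isSimpleArc_inter_sUnion_subset hσ hpσ hp hpa ha
      fun h ↦ hb ⟨σ, hσ, h⟩
    have hx : x ∉ ⋃₀ A := fun h ↦
      hxb.left_notMem (mem_singleton_iff.1 (hRA ⟨hR.right_mem, h⟩) ▸ hpσ)
    have hfewer : {τ ∈ A | ¬SameFace τ x b} ⊂ {τ ∈ A | ¬SameFace τ a b} := by
      refine ⟨fun τ hτ ↦ ⟨hτ.1, fun hτab ↦ hτ.2 ?_⟩, fun hsub ↦ (hsub ⟨hσ, hσab⟩).2 hxb⟩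
      have hRτ := disjoint_of_inter_sUnion_subset hp hσ hpσ hRA hτ.1 fun h ↦ hτ.2 (h ▸ hxb)
      exact (SameFace.of_isPreconnected hR.isPreconnected hRτ hR.right_mem hR.left_mem).trans hτab
    obtain ⟨S, hS⟩ := ih _ (hn ▸ ncard_lt_ncard hfewer (hA.finite.sep _)) hx rfl
    exact hS.exists_of_crossing hR hp hσ hpσ hRA hxb hσab

end Plane

lemma exists_isDualPath {X : Type*} [TopologicalSpace X] {A : Set (Set X)} {a b : X}
    (hA : IsArrangementOfArcs A) (e : X ≃ₜ ℂ) (ha : a ∉ ⋃₀ A) (hb : b ∉ ⋃₀ A) :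
    ∃ S, IsDualPath A S a b := by
  suffices h : ∃ S, IsDualPath ((e '' ·) '' A) S (e a) (e b) by
    obtain ⟨S, hS⟩ := h
    exact ⟨e.symm '' S, by simpa [image_image] using hS.image e.symm⟩
  have hnotMem : ∀ x ∉ ⋃₀ A, e x ∉ ⋃₀ ((e '' ·) '' A) := by
    rintro x hx ⟨_, ⟨σ, hσ, rfl⟩, hxσ⟩
    exact hx ⟨σ, hσ, e.injective.mem_set_image.1 hxσ⟩
  obtain ⟨S, hS⟩ := (hA.image e).exists_isMinimalArc (hnotMem a ha) (hnotMem b hb)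
  refine ⟨S, hS.isSimpleArc, hS.disjoint_multiplePoints, hS.subsingleton_inter, fun σ hσ p hp ↦ ?_⟩
  exact hS.isSimpleArc.crossesAt ((hA.image e).isOpenArc σ hσ) (fun h ↦ hnotMem a ha ⟨σ, hσ, h⟩)
    (fun h ↦ hnotMem b hb ⟨σ, hσ, h⟩)
    (fun h ↦ disjoint_left.1 (hS.disjoint_of_sameFace σ hσ h) hp.1 hp.2)
    (hS.subsingleton_inter σ hσ) hp

end IsArrangementOfArcs

lemma IsArcArrangement.isArrangementOfArcs {A : Finset (Set Plane)} (hA : IsArcArrangement A) :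
    IsArrangementOfArcs (A : Set (Set Plane)) where
  finite := A.finite_toSet
  isOpenArc σ hσ :=
    let ⟨hclosed, ⟨e⟩, _⟩ := hA.1 σ hσ
    isOpenArc_of_homeomorph hclosed e
  not_isPreconnected_compl σ hσ := (hA.1 σ hσ).2.2
  subsingleton_inter σ hσ τ hτ hne := (hA.2 σ hσ τ hτ hne).1
  crossesAt σ hσ τ hτ hne p hp := ((hA.2 σ hσ τ hτ hne).2 p hp).1

/-- **Existence of dual paths.** If `a`, `b` lie on no arc of an arrangement of arcs `A`,
then there is a simple arc from `a` to `b` avoiding all intersection points of arcs of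
`A` and meeting each arc of `A` in at most one point, at which it crosses that arc. -/
theorem exists_dual_path (A : Finset (Set Plane)) (hA : IsArcArrangement A)
    (a b : Plane) (hab : a ≠ b) (ha : ∀ σ ∈ A, a ∉ σ) (hb : ∀ σ ∈ A, b ∉ σ) :
    ∃ f : ℝ → Plane, ContinuousOn f (Set.Icc 0 1) ∧ Set.InjOn f (Set.Icc 0 1) ∧
      f 0 = a ∧ f 1 = b ∧
      (∀ p ∈ f '' Set.Icc (0 : ℝ) 1, ∀ σ ∈ A, ∀ τ ∈ A, σ ≠ τ → ¬(p ∈ σ ∧ p ∈ τ)) ∧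
      ∀ σ ∈ A, (f '' Set.Icc (0 : ℝ) 1 ∩ σ).Subsingleton ∧
        ∀ p ∈ f '' Set.Icc (0 : ℝ) 1 ∩ σ, CrossesAt σ (f '' Set.Icc (0 : ℝ) 1) p := by
  let e : Plane ≃ₜ ℂ := Complex.orthonormalBasisOneI.repr.toHomeomorph.symm
  obtain ⟨S, hS⟩ := hA.isArrangementOfArcs.exists_isDualPath e
    (fun ⟨σ, hσ, h⟩ ↦ ha σ hσ h) (fun ⟨σ, hσ, h⟩ ↦ hb σ hσ h)
  obtain ⟨f, hf, hfi, h0, h1, rfl⟩ := hS.isSimpleArc.exists_param hab zero_lt_one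
  refine ⟨f, hf, hfi, h0, h1, fun p hp σ hσ τ hτ hne hpστ ↦ ?_, fun σ hσ ↦ ?_⟩
  · exact disjoint_left.1 hS.disjoint_multiplePoints hp ⟨σ, hσ, τ, hτ, hne, hpστ⟩
  · exact ⟨hS.subsingleton_inter σ hσ, hS.crossesAt σ hσ⟩

end
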